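/- arXiv:1907.06681 — 2 statements merged into one kernel-verified Lean document; each statement's English description precedes it below -/
import Mathlib

section
/- There exists ε > 0 such that for all real z with |z| < ε the series ∑_{n≥0} fₙ zⁿ/n! converges and equals √2 / (√2 − tanh(z·√2)). -/
open scoped Classical in
/-- The number of peaks of a permutation of `Fin n` (0-indexed: a peak is an
index `i` with `1 ≤ i ≤ n-2` such that `π (i-1) < π i > π (i+1)`;
this matches the 1-indexed condition `2 ≤ i ≤ n-1` of the paper). -/
noncomputable def numPeaks {n : ℕ} (π : Equiv.Perm (Fin n)) : ℕ :=
  (Finset.univ.filter fun i : Fin n =>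
    ∃ (_ : 1 ≤ (i : ℕ)) (h2 : (i : ℕ) + 1 < n),
      π ⟨(i : ℕ) - 1, Nat.lt_of_le_of_lt (Nat.sub_le _ _) i.isLt⟩ < π i ∧
      π ⟨(i : ℕ) + 1, h2⟩ < π i).card

/-- The peak polynomial `Pₙ(t) = ∑_{π ∈ Sₙ} t^(pk π)`, evaluated at `t : ℝ`. -/
noncomputable def peakPoly (n : ℕ) (t : ℝ) : ℝ :=
  ∑ π : Equiv.Perm (Fin n), t ^ numPeaks π

/-- `fₙ = Pₙ(-1)`. -/
noncomputable def f (n : ℕ) : ℝ := peakPoly n (-1)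

/-!
Inserting a new largest value into a permutation of length `m + 1` with `k` peaks leaves the number
of peaks unchanged at `2 * k + 2` of the `m + 2` gaps (the two ends and the two gaps next to each
peak) and raises it by one at the other `m - 2 * k`. Differentiation follows the same rule: if
`G' = 2 * Y * G` and `Y' = t * G`, then the `m`-th derivative of `G` is
`∑ π ∈ Sₘ₊₁, t ^ pk π * G ^ (pk π + 1) * Y ^ (m - 2 * pk π)`, which is `Pₘ₊₁(t)` where `G = Y = 1`.

With `s ^ 2 = 1 - t`, the function `F z = s / (s - tanh (z * s))` satisfies the Riccati equation
`F' = F ^ 2 - (1 - t) * (F - 1) ^ 2` and `F 0 = 1`, so that `G = F'` and `Y = 1 - t + t * F` form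
such a pair with `G 0 = Y 0 = 1`. Hence the Taylor coefficients of `F` at `0` are `Pₙ(t) / n!`.
-/

open Finset
open scoped Filter Topology

section Words

variable {ι α β : Type*}

/-- The word `w`, indexed by an ordered set, has a peak at `i`: the index `i` has an immediate
predecessor and an immediate successor, and at each of them `w` is smaller than at `i`. -/
def IsPeak [Preorder ι] [Preorder α] (w : ι → α) (i : ι) : Prop :=
  (∃ j, j ⋖ i ∧ w j < w i) ∧ ∃ k, i ⋖ k ∧ w k < w i

theorem IsPeak.not_isPeak_of_covBy [LinearOrder ι] [Preorder α] {w : ι → α} {i j : ι}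
    (hi : IsPeak w i) (hij : i ⋖ j) : ¬ IsPeak w j := by
  rintro ⟨⟨i', hi'j, hlt⟩, -⟩
  obtain ⟨-, j', hij', hgt⟩ := hi
  obtain rfl := hi'j.unique_left hij
  obtain rfl := hij'.unique_right hij
  exact hlt.asymm hgt

theorem isPeak_comp_iff [Preorder ι] [LinearOrder α] [Preorder β] {e : α → β}
    (he : StrictMono e) {w : ι → α} {i : ι} :
    IsPeak (e ∘ w) i ↔ IsPeak w i := by
  simp only [IsPeak, Function.comp_apply, he.lt_iff_lt]

open scoped Classical in
/-- The set of peaks of a word with finitely many letters. -/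
noncomputable def peaks [Fintype ι] [Preorder ι] [Preorder α] (w : ι → α) : Finset ι :=
  {i | IsPeak w i}

@[simp]
theorem mem_peaks [Fintype ι] [Preorder ι] [Preorder α] {w : ι → α} {i : ι} :
    i ∈ peaks w ↔ IsPeak w i := by
  simp [peaks]

theorem peaks_comp [Fintype ι] [Preorder ι] [LinearOrder α] [Preorder β] {e : α → β}
    (he : StrictMono e) (w : ι → α) : peaks (e ∘ w) = peaks w := by
  ext i
  simp only [mem_peaks, isPeak_comp_iff he]

end Words

section Insertion

variable {n : ℕ} {α : Type*} [Preorder α] {w : Fin n → α} {a : α}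

theorem fin_covBy_iff {i j : Fin n} : i ⋖ j ↔ (i : ℕ) + 1 = j := by
  rw [Fin.covBy_iff, Nat.covBy_iff_add_one_eq]

theorem succAbove_covBy_succAbove_iff {p : Fin (n + 1)} {i j : Fin n} :
    p.succAbove i ⋖ p.succAbove j ↔ i ⋖ j ∧ p ≠ i.succ := by
  simp only [fin_covBy_iff, ne_eq, Fin.ext_iff, Fin.val_succ, Fin.succAbove, Fin.lt_def,
    Fin.val_castSucc]
  split_ifs <;> simp only [Fin.val_succ, Fin.val_castSucc] <;> omega

theorem succ_eq_castSucc_of_covBy {i j : Fin n} (hij : i ⋖ j) : i.succ = j.castSucc :=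
  Fin.ext (fin_covBy_iff.1 hij)

/-- The gaps next to a peak of `w`. Gap `p` of a word of length `n` is where inserting a letter puts
it at position `p`, so that the gaps next to position `i` are `i.castSucc` and `i.succ`. -/
noncomputable def peakGaps (w : Fin n → α) : Finset (Fin (n + 1)) :=
  (peaks w).map Fin.castSuccEmb ∪ (peaks w).map (Fin.succEmb n)

theorem mem_peakGaps {p : Fin (n + 1)} :
    p ∈ peakGaps w ↔ ∃ i, IsPeak w i ∧ (p = i.castSucc ∨ p = i.succ) := by
  simp only [peakGaps, mem_union, mem_map, mem_peaks, Fin.coe_castSuccEmb, Fin.coe_succEmb]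
  grind

theorem zero_notMem_peakGaps : 0 ∉ peakGaps w := by
  intro h
  obtain ⟨i, ⟨⟨j, hji, -⟩, -⟩, hi | hi⟩ := mem_peakGaps.1 h
  · exact (Fin.succ_ne_zero j) ((succ_eq_castSucc_of_covBy hji).trans hi.symm)
  · exact Fin.succ_ne_zero i hi.symm

theorem last_notMem_peakGaps : Fin.last n ∉ peakGaps w := by
  intro h
  obtain ⟨i, ⟨-, k, hik, -⟩, hi | hi⟩ := mem_peakGaps.1 h
  · exact Fin.castSucc_ne_last i hi.symm
  · exact Fin.castSucc_ne_last k ((succ_eq_castSucc_of_covBy hik).symm.trans hi.symm)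

theorem castSucc_ne_succ_of_isPeak {i j : Fin n} (hi : IsPeak w i) (hj : IsPeak w j) :
    i.castSucc ≠ j.succ := fun h =>
  hj.not_isPeak_of_covBy (fin_covBy_iff.2 (congrArg Fin.val h).symm) hi

theorem card_peakGaps (w : Fin n → α) : #(peakGaps w) = 2 * #(peaks w) := by
  have hdisj : Disjoint ((peaks w).map Fin.castSuccEmb) ((peaks w).map (Fin.succEmb n)) := by
    simp only [disjoint_left, mem_map, mem_peaks, not_exists, not_and]
    rintro _ ⟨i, hi, rfl⟩ j hj
    exact (castSucc_ne_succ_of_isPeak hi hj).symm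
  rw [peakGaps, card_union_of_disjoint hdisj, card_map, card_map, two_mul]

/-- The gaps of `w` where the insertion of a maximal letter leaves the number of peaks unchanged:
the two ends, where no peak is created, and the gaps next to a peak, where the new peak replaces an
old one. -/
noncomputable def stableGaps (w : Fin n → α) : Finset (Fin (n + 1)) :=
  {0, Fin.last n} ∪ peakGaps w

theorem mem_stableGaps {p : Fin (n + 1)} :
    p ∈ stableGaps w ↔ (p = 0 ∨ p = Fin.last n) ∨ p ∈ peakGaps w := by
  simp only [stableGaps, mem_union, mem_insert, mem_singleton]

theorem card_stableGaps {m : ℕ} (w : Fin (m + 1) → α) : #(stableGaps w) = 2 * #(peaks w) + 2 := by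
  have hdisj : Disjoint {0, Fin.last (m + 1)} (peakGaps w) := by
    simp [zero_notMem_peakGaps, last_notMem_peakGaps]
  rw [stableGaps, card_union_of_disjoint hdisj, card_peakGaps, card_pair (Fin.last_pos.ne),
    add_comm]

theorem two_mul_card_peaks_le {m : ℕ} (w : Fin (m + 1) → α) : 2 * #(peaks w) ≤ m := by
  have h := card_le_univ (stableGaps w)
  rw [card_stableGaps, Fintype.card_fin] at h
  omega

theorem isPeak_insertNth_self_iff (hw : ∀ i, w i < a) {p : Fin (n + 1)} :
    IsPeak (p.insertNth a w : Fin (n + 1) → α) p ↔ p ≠ 0 ∧ p ≠ Fin.last n := by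
  have lt_of_ne : ∀ q ≠ p, (p.insertNth a w : Fin (n + 1) → α) q < a := by
    intro q hq
    obtain ⟨i, rfl⟩ := Fin.exists_succAbove_eq hq
    simpa using hw i
  simp only [IsPeak, Fin.insertNth_apply_same]
  refine and_congr ⟨?_, fun hp => ?_⟩ ⟨?_, fun hp => ?_⟩
  · rintro ⟨j, hjp, -⟩ rfl
    exact not_lt_bot hjp.lt
  · obtain ⟨i, rfl⟩ := Fin.exists_succ_eq.2 hp
    have hip : i.castSucc ⋖ i.succ := fin_covBy_iff.2 rfl
    exact ⟨_, hip, lt_of_ne _ hip.ne⟩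
  · rintro ⟨k, hpk, -⟩ rfl
    exact not_top_lt hpk.lt
  · obtain ⟨i, rfl⟩ := Fin.exists_castSucc_eq.2 hp
    have hpi : i.castSucc ⋖ i.succ := fin_covBy_iff.2 rfl
    exact ⟨_, hpi, lt_of_ne _ hpi.ne'⟩

theorem isPeak_insertNth_succAbove_iff (hw : ∀ i, w i < a) {p : Fin (n + 1)} {i : Fin n} :
    IsPeak (p.insertNth a w : Fin (n + 1) → α) (p.succAbove i) ↔
      IsPeak w i ∧ p ≠ i.castSucc ∧ p ≠ i.succ := by
  have not_lt : ¬ a < w i := (hw i).not_gt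
  simp only [IsPeak, Fin.exists_iff_succAbove p, Fin.insertNth_apply_same,
    Fin.insertNth_apply_succAbove, not_lt, and_false, false_or, succAbove_covBy_succAbove_iff]
  constructor
  · rintro ⟨⟨j, ⟨hji, hpj⟩, hj⟩, k, ⟨hik, hpi⟩, hk⟩
    exact ⟨⟨⟨j, hji, hj⟩, k, hik, hk⟩, succ_eq_castSucc_of_covBy hji ▸ hpj, hpi⟩
  · rintro ⟨⟨⟨j, hji, hj⟩, k, hik, hk⟩, hpi, hpi'⟩
    exact ⟨⟨j, ⟨hji, succ_eq_castSucc_of_covBy hji ▸ hpi⟩, hj⟩, k, ⟨hik, hpi'⟩, hk⟩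

open scoped Classical in
theorem card_peaks_insertNth (hw : ∀ i, w i < a) (p : Fin (n + 1)) :
    #(peaks (p.insertNth a w : Fin (n + 1) → α)) =
      (if p ≠ 0 ∧ p ≠ Fin.last n then 1 else 0) +
        #{i ∈ peaks w | p ≠ i.castSucc ∧ p ≠ i.succ} := by
  simp only [peaks, filter_filter, card_filter, Fin.sum_univ_succAbove _ p,
    isPeak_insertNth_self_iff hw, isPeak_insertNth_succAbove_iff hw]

theorem card_filter_peaks_of_notMem_peakGaps {p : Fin (n + 1)} (hp : p ∉ peakGaps w) :
    #{i ∈ peaks w | p ≠ i.castSucc ∧ p ≠ i.succ} = #(peaks w) := by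
  congr 1
  refine filter_true_of_mem fun i hi => ?_
  rw [mem_peaks] at hi
  rw [mem_peakGaps] at hp
  grind

theorem card_filter_peaks_of_mem_peakGaps {p : Fin (n + 1)} (hp : p ∈ peakGaps w) :
    #{i ∈ peaks w | p ≠ i.castSucc ∧ p ≠ i.succ} + 1 = #(peaks w) := by
  obtain ⟨i, hi, hpi⟩ := mem_peakGaps.1 hp
  have herase : {j ∈ peaks w | p ≠ j.castSucc ∧ p ≠ j.succ} = (peaks w).erase i := by
    ext j
    simp only [mem_filter, mem_erase, mem_peaks]
    constructor
    · rintro ⟨hj, hpj⟩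
      exact ⟨by grind, hj⟩
    · rintro ⟨hji, hj⟩
      have hij : i.castSucc ≠ j.succ := castSucc_ne_succ_of_isPeak hi hj
      have hji' : j.castSucc ≠ i.succ := castSucc_ne_succ_of_isPeak hj hi
      rcases hpi with rfl | rfl
      · exact ⟨hj, Fin.castSucc_injective n |>.ne hji.symm, hij⟩
      · exact ⟨hj, hji'.symm, Fin.succ_injective n |>.ne hji.symm⟩
  rw [herase, card_erase_add_one (mem_peaks.2 hi)]

theorem card_peaks_insertNth_of_mem_stableGaps (hw : ∀ i, w i < a) {p : Fin (n + 1)}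
    (hp : p ∈ stableGaps w) :
    #(peaks (p.insertNth a w : Fin (n + 1) → α)) = #(peaks w) := by
  rw [card_peaks_insertNth hw]
  rcases mem_stableGaps.1 hp with hend | hpeak
  · have hp' : p ∉ peakGaps w := by
      rcases hend with rfl | rfl
      exacts [zero_notMem_peakGaps, last_notMem_peakGaps]
    rw [if_neg (by tauto), zero_add, card_filter_peaks_of_notMem_peakGaps hp']
  · have hinner : p ≠ 0 ∧ p ≠ Fin.last n :=
      ⟨ne_of_mem_of_not_mem hpeak zero_notMem_peakGaps,
        ne_of_mem_of_not_mem hpeak last_notMem_peakGaps⟩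
    rw [if_pos hinner, add_comm, card_filter_peaks_of_mem_peakGaps hpeak]

theorem card_peaks_insertNth_of_notMem_stableGaps (hw : ∀ i, w i < a) {p : Fin (n + 1)}
    (hp : p ∉ stableGaps w) :
    #(peaks (p.insertNth a w : Fin (n + 1) → α)) = #(peaks w) + 1 := by
  simp only [mem_stableGaps, not_or] at hp
  rw [card_peaks_insertNth hw, if_pos hp.1, card_filter_peaks_of_notMem_peakGaps hp.2, add_comm]

theorem sum_card_peaks_insertNth {m : ℕ} {w : Fin (m + 1) → α} (hw : ∀ i, w i < a)
    {M : Type*} [AddCommMonoid M] (g : ℕ → M) :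
    ∑ p : Fin (m + 2), g #(peaks (p.insertNth a w : Fin (m + 2) → α)) =
      (2 * #(peaks w) + 2) • g #(peaks w) + (m - 2 * #(peaks w)) • g (#(peaks w) + 1) := by
  have hcompl : #(stableGaps w)ᶜ = m - 2 * #(peaks w) := by
    rw [card_compl, Fintype.card_fin, card_stableGaps]
    omega
  rw [← sum_add_sum_compl (stableGaps w), ← card_stableGaps w, ← hcompl]
  congr 1 <;> refine sum_eq_card_nsmul fun p hp => ?_
  · rw [card_peaks_insertNth_of_mem_stableGaps hw hp]
  · rw [card_peaks_insertNth_of_notMem_stableGaps hw (mem_compl.1 hp)]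

end Insertion

section Permutations

variable {n : ℕ}

theorem numPeaks_eq_card_peaks (π : Equiv.Perm (Fin n)) : numPeaks π = #(peaks π) := by
  classical
  rw [numPeaks]
  congr 1
  ext i
  simp only [mem_filter_univ, mem_peaks, IsPeak, fin_covBy_iff]
  constructor
  · rintro ⟨hpos, hsucc, hpred_lt, hsucc_lt⟩
    exact ⟨⟨_, Nat.sub_add_cancel hpos, hpred_lt⟩, _, rfl, hsucc_lt⟩
  · rintro ⟨⟨j, hj, hpred_lt⟩, k, hk, hsucc_lt⟩
    have hpred : (⟨(i : ℕ) - 1, by omega⟩ : Fin n) = j := Fin.ext (Nat.sub_eq_of_eq_add hj.symm)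
    have hsucc : (⟨(i : ℕ) + 1, by omega⟩ : Fin n) = k := Fin.ext hk
    exact ⟨by omega, by omega, hpred ▸ hpred_lt, hsucc ▸ hsucc_lt⟩

theorem two_mul_numPeaks_le {m : ℕ} (π : Equiv.Perm (Fin (m + 1))) : 2 * numPeaks π ≤ m :=
  numPeaks_eq_card_peaks π ▸ two_mul_card_peaks_le π

theorem peakPoly_zero (t : ℝ) : peakPoly 0 t = 1 := by
  simp [peakPoly, numPeaks]

/-- The permutation of `Fin (n + 1)` whose one-line notation is that of `σ` with the new largest
value inserted at position `p`. -/
def insertLast (p : Fin (n + 1)) (σ : Equiv.Perm (Fin n)) : Equiv.Perm (Fin (n + 1)) :=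
  (finSuccEquiv' p).trans (σ.optionCongr.trans finSuccEquivLast.symm)

theorem coe_insertLast (p : Fin (n + 1)) (σ : Equiv.Perm (Fin n)) :
    ⇑(insertLast p σ) = p.insertNth (Fin.last n) (Fin.castSucc ∘ σ) := by
  refine Fin.eq_insertNth_iff.2 ⟨by simp [insertLast], ?_⟩
  ext i
  simp [insertLast, Fin.removeNth]

theorem insertLast_bijective :
    Function.Bijective fun x : Fin (n + 1) × Equiv.Perm (Fin n) => insertLast x.1 x.2 := by
  rw [Fintype.bijective_iff_injective_and_card]
  refine ⟨?_, by simp [Fintype.card_perm, Nat.factorial_succ]⟩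
  rintro ⟨p, σ⟩ ⟨q, τ⟩ (h : insertLast p σ = insertLast q τ)
  have apply_self (r : Fin (n + 1)) (ρ) : insertLast r ρ r = Fin.last n := by
    simp [coe_insertLast]
  obtain rfl : p = q := (insertLast q τ).injective (by rw [apply_self, ← h, apply_self])
  have hcomp : Fin.castSucc ∘ σ = Fin.castSucc ∘ τ := by
    have := congrArg DFunLike.coe h
    rw [coe_insertLast, coe_insertLast] at this
    exact Fin.insertNth_right_injective _ this
  rw [DFunLike.coe_injective ((Fin.castSucc_injective n).comp_left hcomp)]

theorem sum_numPeaks_insertLast {m : ℕ} (σ : Equiv.Perm (Fin (m + 1)))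
    {M : Type*} [AddCommMonoid M] (g : ℕ → M) :
    ∑ p, g (numPeaks (insertLast p σ)) =
      (2 * numPeaks σ + 2) • g (numPeaks σ) + (m - 2 * numPeaks σ) • g (numPeaks σ + 1) := by
  have h := sum_card_peaks_insertNth (w := Fin.castSucc ∘ σ) (fun i => Fin.castSucc_lt_last _) g
  simpa only [peaks_comp Fin.strictMono_castSucc, ← coe_insertLast, ← numPeaks_eq_card_peaks]
    using h

theorem sum_perm_numPeaks_succ (m : ℕ) {M : Type*} [AddCommMonoid M] (g : ℕ → M) :
    ∑ π : Equiv.Perm (Fin (m + 2)), g (numPeaks π) =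
      ∑ σ : Equiv.Perm (Fin (m + 1)),
        ((2 * numPeaks σ + 2) • g (numPeaks σ) + (m - 2 * numPeaks σ) • g (numPeaks σ + 1)) := by
  simp only [← insertLast_bijective.sum_comp, Fintype.sum_prod_type_right, sum_numPeaks_insertLast]

end Permutations

section Derivatives

variable {𝕜 𝔸 : Type*} [NontriviallyNormedField 𝕜] [NormedCommRing 𝔸] [NormedAlgebra 𝕜 𝔸]
  {G Y : 𝕜 → 𝔸} {t : 𝔸}

/-- Differentiation mirrors the insertion of a largest value: the `k + 1` factors `G` account for
the `2 * k + 2` stable gaps, the factors `Y` for the `m - 2 * k` other ones. -/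
theorem hasDerivAt_peakMonomial {z : 𝕜} (hG : HasDerivAt G (2 * Y z * G z) z)
    (hY : HasDerivAt Y (t * G z) z) {m k : ℕ} (hk : 2 * k ≤ m) :
    HasDerivAt (fun z => t ^ k * G z ^ (k + 1) * Y z ^ (m - 2 * k))
      ((2 * k + 2) • (t ^ k * G z ^ (k + 1) * Y z ^ (m + 1 - 2 * k)) +
        (m - 2 * k) • (t ^ (k + 1) * G z ^ (k + 1 + 1) * Y z ^ (m + 1 - 2 * (k + 1)))) z := by
  refine (((hG.fun_pow (k + 1)).const_mul (t ^ k)).fun_mul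
    (hY.fun_pow (m - 2 * k))).congr_deriv ?_
  rw [show m + 1 - 2 * k = m - 2 * k + 1 by omega,
    show m + 1 - 2 * (k + 1) = m - 2 * k - 1 by omega]
  simp only [nsmul_eq_mul, Nat.add_sub_cancel]
  push_cast
  ring

theorem iteratedDeriv_eventuallyEq_sum_numPeaks {x : 𝕜}
    (hG : ∀ᶠ z in 𝓝 x, HasDerivAt G (2 * Y z * G z) z)
    (hY : ∀ᶠ z in 𝓝 x, HasDerivAt Y (t * G z) z) (m : ℕ) :
    iteratedDeriv m G =ᶠ[𝓝 x] fun z => ∑ π : Equiv.Perm (Fin (m + 1)),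
      t ^ numPeaks π * G z ^ (numPeaks π + 1) * Y z ^ (m - 2 * numPeaks π) := by
  induction m with
  | zero =>
    have numPeaks_eq_zero (π : Equiv.Perm (Fin (0 + 1))) : numPeaks π = 0 := by
      have := two_mul_numPeaks_le π
      omega
    simp [numPeaks_eq_zero]
  | succ m ih =>
    rw [iteratedDeriv_succ]
    refine ih.deriv.trans ?_
    filter_upwards [hG, hY] with z hGz hYz
    rw [sum_perm_numPeaks_succ m fun k => t ^ k * G z ^ (k + 1) * Y z ^ (m + 1 - 2 * k)]
    exact (HasDerivAt.fun_sum fun π _ =>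
      hasDerivAt_peakMonomial hGz hYz (two_mul_numPeaks_le π)).deriv

theorem iteratedDeriv_eq_peakPoly {F : ℝ → ℝ} {t x : ℝ} (hx : F x = 1)
    (hF : ∀ᶠ z in 𝓝 x, HasDerivAt F (F z ^ 2 - (1 - t) * (F z - 1) ^ 2) z) (n : ℕ) :
    iteratedDeriv n F x = peakPoly n t := by
  rcases n with _ | m
  · rw [iteratedDeriv_zero, hx, peakPoly_zero]
  set G : ℝ → ℝ := fun z => F z ^ 2 - (1 - t) * (F z - 1) ^ 2
  set Y : ℝ → ℝ := fun z => 1 - t + t * F z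
  have hG : ∀ᶠ z in 𝓝 x, HasDerivAt G (2 * Y z * G z) z := by
    filter_upwards [hF] with z hFz
    have hsq := ((hFz.sub_const 1).fun_pow 2).const_mul (1 - t)
    refine ((hFz.fun_pow 2).fun_sub hsq).congr_deriv ?_
    simp only [G, Y]
    push_cast
    ring
  have hY : ∀ᶠ z in 𝓝 x, HasDerivAt Y (t * G z) z := by
    filter_upwards [hF] with z hFz
    exact (hFz.const_mul t).const_add (1 - t)
  have hderiv : deriv F =ᶠ[𝓝 x] G := hF.mono fun z hFz => hFz.deriv
  have hGx : G x = 1 := by simp [G, hx]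
  have hYx : Y x = 1 := by simp [Y, hx]
  rw [iteratedDeriv_succ', (hderiv.iteratedDeriv m).eq_of_nhds,
    (iteratedDeriv_eventuallyEq_sum_numPeaks hG hY m).eq_of_nhds]
  simp only [hGx, hYx, one_pow, mul_one, peakPoly]

end Derivatives

section Analysis

theorem eventually_hasSum_taylor {𝕜 : Type*} [NontriviallyNormedField 𝕜] [CompleteSpace 𝕜]
    [CharZero 𝕜] {F : 𝕜 → 𝕜} {x : 𝕜} (hF : AnalyticAt 𝕜 F x) :
    ∀ᶠ z in 𝓝 0, HasSum (fun n : ℕ => iteratedDeriv n F x * z ^ n / n.factorial) (F (x + z)) := by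
  filter_upwards [hF.hasFPowerSeriesAt.eventually_hasSum] with z hz
  simpa only [FormalMultilinearSeries.ofScalars_apply_eq, smul_eq_mul, div_mul_eq_mul_div]
    using hz

theorem analyticAt_real_tanh (x : ℝ) : AnalyticAt ℝ Real.tanh x := by
  rw [funext Real.tanh_eq_sinh_div_cosh]
  exact Real.analyticAt_sinh.fun_div Real.analyticAt_cosh (Real.cosh_pos x).ne'

theorem analyticAt_sub_tanh_mul (s z : ℝ) : AnalyticAt ℝ (fun z => s - Real.tanh (z * s)) z :=
  analyticAt_const.fun_sub <| (analyticAt_real_tanh (z * s)).fun_comp (f := fun z => z * s) <|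
    analyticAt_id.fun_mul analyticAt_const

theorem hasDerivAt_real_tanh (x : ℝ) : HasDerivAt Real.tanh (1 - Real.tanh x ^ 2) x := by
  have hcosh : Real.cosh x ≠ 0 := (Real.cosh_pos x).ne'
  rw [funext Real.tanh_eq_sinh_div_cosh]
  refine ((Real.hasDerivAt_sinh x).fun_div (Real.hasDerivAt_cosh x) hcosh).congr_deriv ?_
  field_simp

/-- The closed form of the exponential generating function of the peak polynomials at
`t = 1 - s ^ 2`. -/
noncomputable def peakEgf (s z : ℝ) : ℝ :=
  s / (s - Real.tanh (z * s))

variable {s : ℝ}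

theorem analyticAt_peakEgf_zero (hs : s ≠ 0) : AnalyticAt ℝ (peakEgf s) 0 :=
  analyticAt_const.fun_div (analyticAt_sub_tanh_mul s 0) (by simpa using hs)

theorem peakEgf_zero (hs : s ≠ 0) : peakEgf s 0 = 1 := by
  simp [peakEgf, hs]

theorem hasDerivAt_peakEgf {z : ℝ} (hz : s - Real.tanh (z * s) ≠ 0) :
    HasDerivAt (peakEgf s) (peakEgf s z ^ 2 - s ^ 2 * (peakEgf s z - 1) ^ 2) z := by
  have hscale : HasDerivAt (fun z => z * s) s z := hasDerivAt_mul_const s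
  have hden := ((hasDerivAt_real_tanh (z * s)).comp z hscale).const_sub s
  refine ((hasDerivAt_const z s).fun_div hden hz).congr_deriv ?_
  simp only [peakEgf, Function.comp_apply]
  generalize Real.tanh (z * s) = T at hz ⊢
  field_simp
  ring

theorem eventually_hasDerivAt_peakEgf (hs : s ≠ 0) :
    ∀ᶠ z in 𝓝 0, HasDerivAt (peakEgf s) (peakEgf s z ^ 2 - s ^ 2 * (peakEgf s z - 1) ^ 2) z := by
  have hne : ∀ᶠ z in 𝓝 0, s - Real.tanh (z * s) ≠ 0 :=
    (analyticAt_sub_tanh_mul s 0).continuousAt.eventually_ne (by simpa using hs)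
  exact hne.mono fun z => hasDerivAt_peakEgf

end Analysis

theorem f_egf_general {t : ℝ} (ht : t < 1) :
    ∃ ε > 0, ∀ z : ℝ, |z| < ε →
      HasSum (fun n : ℕ => peakPoly n t * z ^ n / n.factorial)
        (√(1 - t) / (√(1 - t) - Real.tanh (z * √(1 - t)))) := by
  have hs : √(1 - t) ≠ 0 := (Real.sqrt_pos.2 (sub_pos.2 ht)).ne'
  have hcoeff : ∀ n, iteratedDeriv n (peakEgf √(1 - t)) 0 = peakPoly n t := by
    refine iteratedDeriv_eq_peakPoly (peakEgf_zero hs) ?_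
    simpa only [Real.sq_sqrt (sub_nonneg.2 ht.le)] using eventually_hasDerivAt_peakEgf hs
  have hsum := eventually_hasSum_taylor (analyticAt_peakEgf_zero hs)
  simp only [hcoeff, zero_add, Metric.eventually_nhds_iff, Real.dist_0_eq_abs] at hsum
  exact hsum

/-- There is `ε > 0` such that for all real `z` with `|z| < ε`, the series
`∑_{n≥0} fₙ zⁿ/n!` converges and equals `√2 / (√2 - tanh(z√2))`. -/
theorem f_egf :
    ∃ ε > 0, ∀ z : ℝ, |z| < ε →
      HasSum (fun n : ℕ => f n * z ^ n / n.factorial)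
        (Real.sqrt 2 / (Real.sqrt 2 - Real.tanh (z * Real.sqrt 2))) := by
  have h := f_egf_general (t := -1) (by norm_num)
  rwa [sub_neg_eq_add, one_add_one_eq_two] at h
end

section
/- The set of natural numbers n for which fₙ and −cos((n+1)θ) do not have the same sign has natural density zero; that is, (1/N)·#{n ≤ N : sign(fₙ) ≠ sign(−cos((n+1)θ))} → 0 as N → ∞. -/
/-!
Inserting a maximal letter gives a recurrence for the distribution of peaks on `Sₙ`, the same one
that governs the iterated derivatives of a solution of a Riccati equation `b' = μ (b² + c)`. For
`b = π cot (πz)` the derivatives are also given by the partial fraction expansion of the cotangent.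
Comparing the two at the point where `cot² (πz) = -1/2` yields

  `fₙ = -n! ∑ₖ cₖ ^ (n + 1)`, `cₖ = 2√2 / (log (3 + 2√2) - (2k + 1) π i)`, `k ∈ ℤ`.

The conjugate pair `c₀`, `c₋₁` dominates and `θ = arg c₀`, hence `fₙ / (2 n! |c₀| ^ (n + 1))`
differs from `-cos ((n + 1) θ)` by `o(1)`. A sign mismatch therefore forces `cos ((n + 1) θ)` to be
small. If this happens at both `n` and `n + d`, then `sin (d θ)` is small as well; since `θ / π`
is irrational, the gaps between mismatches tend to infinity and their density is zero.

Irrationality of `θ / π` holds because `tan θ = π / log (3 + 2√2)` is transcendental: otherwise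
`exp ((π / log a) i · log a) = -1` with `a = 3 + 2√2` would contradict the Gelfond–Schneider
theorem, which is proved here by the auxiliary function method.
-/

/-! ### Sets with growing gaps -/

section Density

open Filter Finset

theorem card_filter_range_le_of_gaps (P : ℕ → Prop) [DecidablePred P] {M n₀ : ℕ}
    (hgap : ∀ n ≥ n₀, ∀ d, 1 ≤ d → d ≤ M → P n → ¬ P (n + d)) (N : ℕ) :
    #{n ∈ range (N + 1) | P n} ≤ n₀ + (N / (M + 1) + 1) := by
  have hsplit : {n ∈ range (N + 1) | P n} ⊆ range n₀ ∪ {n ∈ range (N + 1) | n₀ ≤ n ∧ P n} := by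
    intro n
    simp only [mem_filter, mem_union, mem_range]
    grind
  have hinj : Set.InjOn (· / (M + 1)) {n | n₀ ≤ n ∧ P n} := by
    have hne : ∀ a b, n₀ ≤ a → P a → P b → a < b → a / (M + 1) ≠ b / (M + 1) := by
      intro a b ha hPa hPb hab hdiv
      have hb := Nat.lt_mul_div_succ b (Nat.succ_pos M)
      have ha' := Nat.mul_div_le a (M + 1)
      simp only [Nat.succ_eq_add_one, mul_add_one, ← hdiv] at hb
      exact hgap a ha (b - a) (by omega) (by omega) hPa (by rwa [Nat.add_sub_cancel' hab.le])
    rintro a ⟨ha, hPa⟩ b ⟨hb, hPb⟩ hdiv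
    by_contra hab
    rcases lt_or_gt_of_ne hab with hlt | hlt
    · exact hne a b ha hPa hPb hlt hdiv
    · exact hne b a hb hPb hPa hlt hdiv.symm
  have hlate : #{n ∈ range (N + 1) | n₀ ≤ n ∧ P n} ≤ #(range (N / (M + 1) + 1)) := by
    refine card_le_card_of_injOn (· / (M + 1)) (fun n hn => ?_) (hinj.mono fun n hn => ?_)
    · simp only [coe_filter, coe_range, mem_range, Set.mem_ofPred_eq, Set.mem_Iio] at hn ⊢
      exact Nat.lt_succ_of_le (Nat.div_le_div_right (Nat.le_of_lt_succ hn.1))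
    · exact (mem_filter.1 (mem_coe.1 hn)).2
  calc #{n ∈ range (N + 1) | P n}
      ≤ #(range n₀) + #{n ∈ range (N + 1) | n₀ ≤ n ∧ P n} :=
        (card_le_card hsplit).trans (card_union_le _ _)
    _ ≤ n₀ + (N / (M + 1) + 1) := by simpa only [card_range, add_le_add_iff_left] using hlate

theorem tendsto_card_filter_range_div_zero_of_gaps (P : ℕ → Prop) [DecidablePred P]
    (hgap : ∀ M : ℕ, ∀ᶠ n in atTop, ∀ d, 1 ≤ d → d ≤ M → P n → ¬ P (n + d)) :
    Tendsto (fun N : ℕ => (#{n ∈ range (N + 1) | P n} : ℝ) / N) atTop (nhds 0) := by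
  rw [Metric.tendsto_atTop]
  intro ε hε
  obtain ⟨M, hM⟩ := exists_nat_gt (2 / ε)
  obtain ⟨n₀, hn₀⟩ := eventually_atTop.1 (hgap M)
  obtain ⟨N₀, hN₀⟩ := exists_nat_gt (2 * (n₀ + 1) / ε)
  refine ⟨N₀ + 1, fun N hN => ?_⟩
  have hN_pos : (0 : ℝ) < N := by exact_mod_cast Nat.zero_lt_of_lt hN
  have hN₀N : (N₀ : ℝ) ≤ N := by exact_mod_cast Nat.le_of_succ_le hN
  have hcount : (#{n ∈ range (N + 1) | P n} : ℝ) ≤ n₀ + ((N / (M + 1) : ℕ) + 1) := by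
    exact_mod_cast card_filter_range_le_of_gaps P hn₀ N
  have hdiv : ((N / (M + 1) : ℕ) : ℝ) ≤ ε / 2 * N := by
    calc ((N / (M + 1) : ℕ) : ℝ) ≤ N / (M + 1 : ℕ) := Nat.cast_div_le
      _ ≤ ε / 2 * N := by
        rw [div_le_iff₀ (by positivity)]
        rw [div_lt_iff₀ hε] at hM
        push_cast
        nlinarith
  rw [Real.dist_eq, sub_zero, abs_of_nonneg (by positivity), div_lt_iff₀ hN_pos]
  rw [div_lt_iff₀ hε] at hN₀
  nlinarith

theorem abs_sin_sub_le_abs_cos_add_abs_cos (x y : ℝ) :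
    |Real.sin (x - y)| ≤ |Real.cos x| + |Real.cos y| := by
  rw [Real.sin_sub, add_comm]
  refine (abs_sub _ _).trans (add_le_add ?_ ?_)
  · rw [abs_mul]
    exact mul_le_of_le_one_left (abs_nonneg _) (Real.abs_sin_le_one x)
  · rw [abs_mul]
    exact mul_le_of_le_one_right (abs_nonneg _) (Real.abs_sin_le_one y)

theorem sign_eq_sign_of_abs_sub_lt {x y : ℝ} (h : |x - y| < |y|) : Real.sign x = Real.sign y := by
  have hlt := abs_lt.1 h
  rcases lt_trichotomy y 0 with hy | rfl | hy
  · rw [abs_of_neg hy] at hlt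
    rw [Real.sign_of_neg hy, Real.sign_of_neg (by linarith)]
  · exact absurd h (by simp)
  · rw [abs_of_pos hy] at hlt
    rw [Real.sign_of_pos hy, Real.sign_of_pos (by linarith)]

theorem sign_div_of_pos {x y : ℝ} (hy : 0 < y) : Real.sign (x / y) = Real.sign x := by
  obtain hx | rfl | hx := lt_trichotomy x 0
  · rw [Real.sign_of_neg hx, Real.sign_of_neg (div_neg_of_neg_of_pos hx hy)]
  · rw [zero_div]
  · rw [Real.sign_of_pos hx, Real.sign_of_pos (div_pos hx hy)]

theorem tendsto_card_sign_ne_sign_cos_div_zero {u : ℕ → ℝ} {θ φ : ℝ}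
    [DecidablePred fun n : ℕ => Real.sign (u n) ≠ Real.sign (Real.cos (n * θ + φ))]
    (hsin : ∀ d : ℕ, 1 ≤ d → Real.sin (d * θ) ≠ 0)
    (hu : Tendsto (fun n : ℕ => u n - Real.cos (n * θ + φ)) atTop (nhds 0)) :
    Tendsto (fun N : ℕ =>
      (#{n ∈ range (N + 1) | Real.sign (u n) ≠ Real.sign (Real.cos (n * θ + φ))} : ℝ) / N)
      atTop (nhds 0) := by
  refine tendsto_card_filter_range_div_zero_of_gaps _ fun M => ?_
  obtain ⟨δ, hδ, hδle⟩ : ∃ δ > 0, ∀ d ∈ Icc 1 M, δ ≤ |Real.sin (d * θ)| := by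
    have hpos : ∀ d ∈ Icc 1 M, 0 < |Real.sin (d * θ)| := fun d hd =>
      abs_pos.2 (hsin d (mem_Icc.1 hd).1)
    rcases (Icc 1 M).eq_empty_or_nonempty with hM | hM
    · exact ⟨1, one_pos, by simp [hM]⟩
    · obtain ⟨d₀, hd₀, hmin⟩ := exists_min_image _ (fun d : ℕ => |Real.sin (d * θ)|) hM
      exact ⟨_, hpos d₀ hd₀, hmin⟩
  have hclose : ∀ᶠ n in atTop, ∀ m ≥ n, |u m - Real.cos (m * θ + φ)| < δ / 2 := by
    have hsmall := hu.abs.eventually_lt_const (u := δ / 2) (by simpa using hδ)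
    obtain ⟨n₀, hn₀⟩ := eventually_atTop.1 hsmall
    exact eventually_atTop.2 ⟨n₀, fun n hn m hm => hn₀ m (hn.trans hm)⟩
  filter_upwards [hclose] with n hn d hd₁ hdM hbad hbad'
  have hcos : ∀ m ≥ n, Real.sign (u m) ≠ Real.sign (Real.cos (m * θ + φ)) →
      |Real.cos (m * θ + φ)| < δ / 2 := fun m hm hne =>
    (not_lt.1 (mt sign_eq_sign_of_abs_sub_lt hne)).trans_lt (hn m hm)
  have hsum := abs_sin_sub_le_abs_cos_add_abs_cos ((n + d : ℕ) * θ + φ) (n * θ + φ)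
  rw [show ((n + d : ℕ) * θ + φ) - (n * θ + φ) = d * θ by push_cast; ring] at hsum
  linarith [hδle d (mem_Icc.2 ⟨hd₁, hdM⟩), hcos n le_rfl hbad, hcos (n + d) (by omega) hbad']

end Density

/-! ### Entire functions with many zeros -/

section EntireZeros

theorem exists_eq_sub_pow_mul_of_le_analyticOrderAt {F : ℂ → ℂ} (hF : Differentiable ℂ F) (c : ℂ)
    {r : ℕ} (hr : (r : ℕ∞) ≤ analyticOrderAt F c) :
    ∃ G : ℂ → ℂ, Differentiable ℂ G ∧ ∀ z, F z = (z - c) ^ r * G z := by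
  induction r generalizing F with
  | zero => exact ⟨F, hF, fun z => by rw [pow_zero, one_mul]⟩
  | succ r ih =>
    have hFc : F c = 0 := by
      by_contra hne
      rw [(hF.analyticAt c).analyticOrderAt_eq_zero.2 hne] at hr
      exact absurd hr (by simp)
    have hd : Differentiable ℂ (dslope F c) := by
      rw [← differentiableOn_univ] at hF ⊢
      exact (Complex.differentiableOn_dslope Filter.univ_mem).2 hF
    have hFd : F = (fun z => z - c) * dslope F c := by
      funext z
      simpa [hFc] using (sub_smul_dslope F c z).symm
    have hd_order : (r : ℕ∞) ≤ analyticOrderAt (dslope F c) c := by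
      have hsub : analyticOrderAt (fun z => z - c) c = 1 := by
        simp
      rw [hFd, analyticOrderAt_mul (by fun_prop) (hd.analyticAt c), hsub, add_comm 1,
        Nat.cast_succ] at hr
      exact (ENat.add_le_add_iff_right ENat.one_ne_top).1 hr
    obtain ⟨G, hG, hdG⟩ := ih hd hd_order
    refine ⟨G, hG, fun z => ?_⟩
    rw [hFd, Pi.mul_apply, hdG, pow_succ']
    ring

theorem exists_eq_prod_sub_pow_mul_of_le_analyticOrderAt {F : ℂ → ℂ} (hF : Differentiable ℂ F)
    {r : ℕ} {S : Finset ℂ} (hS : ∀ s ∈ S, (r : ℕ∞) ≤ analyticOrderAt F s) :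
    ∃ G : ℂ → ℂ, Differentiable ℂ G ∧ ∀ z, F z = (∏ s ∈ S, (z - s)) ^ r * G z := by
  induction S using Finset.induction_on with
  | empty => exact ⟨F, hF, fun z => by simp⟩
  | insert c S hc ih =>
    obtain ⟨G, hG, hFG⟩ := ih fun s hs => hS s (Finset.mem_insert_of_mem hs)
    have hP : Differentiable ℂ fun z => (∏ s ∈ S, (z - s)) ^ r := by fun_prop
    have hPc : analyticOrderAt (fun z => (∏ s ∈ S, (z - s)) ^ r) c = 0 := by
      rw [(hP.analyticAt c).analyticOrderAt_eq_zero]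
      exact pow_ne_zero _ (Finset.prod_ne_zero_iff.2 fun s hs =>
        sub_ne_zero.2 (ne_of_mem_of_not_mem hs hc).symm)
    have hGc : (r : ℕ∞) ≤ analyticOrderAt G c := by
      have hFc := hS c (Finset.mem_insert_self c S)
      rwa [show F = (fun z => (∏ s ∈ S, (z - s)) ^ r) * G from funext hFG,
        analyticOrderAt_mul (hP.analyticAt c) (hG.analyticAt c), hPc, zero_add] at hFc
    obtain ⟨G', hG', hGG'⟩ := exists_eq_sub_pow_mul_of_le_analyticOrderAt hG c hGc
    refine ⟨G', hG', fun z => ?_⟩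
    rw [hFG, hGG', Finset.prod_insert hc, mul_pow]
    ring

theorem iteratedDeriv_sub_pow_mul_self {G : ℂ → ℂ} (hG : Differentiable ℂ G) (c : ℂ) (r : ℕ) :
    iteratedDeriv r (fun z => (z - c) ^ r * G z) c = r.factorial * G c := by
  obtain ⟨G₂, -, hderiv⟩ := iteratedDeriv_mul_pow_sub_of_analytic (k := r) (t := 0) (z₀ := c)
    (R := fun z => (z - c) ^ r * G z) (fun z => hG.analyticAt z) fun z => rfl
  simpa using hderiv c

theorem norm_le_div_pow_of_prod_sub_pow_mul_norm_le {G : ℂ → ℂ} (hG : Differentiable ℂ G)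
    {S : Finset ℂ} {r : ℕ} {ρ R B : ℝ} (hρR : ρ < R) (hS : ∀ s ∈ S, ‖s‖ ≤ ρ)
    (hB : ∀ z : ℂ, ‖z‖ = R → ‖(∏ s ∈ S, (z - s)) ^ r * G z‖ ≤ B) {c : ℂ} (hc : ‖c‖ ≤ ρ) :
    ‖G c‖ ≤ B / (R - ρ) ^ (S.card * r) := by
  have hgap : 0 < R - ρ := sub_pos.2 hρR
  have hR : 0 < R := ((norm_nonneg c).trans hc).trans_lt hρR
  refine Complex.norm_le_of_forall_mem_frontier_norm_le (U := Metric.ball 0 R)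
    Metric.isBounded_ball hG.diffContOnCl (fun z hz => ?_)
    (subset_closure (mem_ball_zero_iff.2 (hc.trans_lt hρR)))
  rw [frontier_ball _ hR.ne', mem_sphere_zero_iff_norm] at hz
  have hprod : (R - ρ) ^ S.card ≤ ∏ s ∈ S, ‖z - s‖ := by
    rw [← Finset.prod_const]
    refine Finset.prod_le_prod (fun _ _ => hgap.le) fun s hs => ?_
    linarith [norm_sub_norm_le z s, hS s hs]
  rw [le_div_iff₀ (by positivity), mul_comm, pow_mul]
  calc ((R - ρ) ^ S.card) ^ r * ‖G z‖ ≤ (∏ s ∈ S, ‖z - s‖) ^ r * ‖G z‖ := by gcongr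
    _ = ‖(∏ s ∈ S, (z - s)) ^ r * G z‖ := by rw [norm_mul, norm_pow, norm_prod]
    _ ≤ B := hB z hz

/-- A Schwarz lemma with several zeros: dividing `F` by `∏ (z - s) ^ r` and applying the maximum
principle on `‖z‖ = R` makes the first derivative that may not vanish very small. -/
theorem norm_iteratedDeriv_le_of_iteratedDeriv_eq_zero {F : ℂ → ℂ} (hF : Differentiable ℂ F)
    {S : Finset ℂ} {r : ℕ} {ρ R B : ℝ} (hρR : ρ < R) (hS : ∀ s ∈ S, ‖s‖ ≤ ρ)
    (hzero : ∀ s ∈ S, ∀ a < r, iteratedDeriv a F s = 0) (hB : ∀ z : ℂ, ‖z‖ = R → ‖F z‖ ≤ B)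
    {s₀ : ℂ} (hs₀ : s₀ ∈ S) :
    ‖iteratedDeriv r F s₀‖ ≤
      r.factorial * ((∏ s ∈ S.erase s₀, ‖s₀ - s‖) ^ r * (B / (R - ρ) ^ (S.card * r))) := by
  obtain ⟨G, hG, hFG⟩ := exists_eq_prod_sub_pow_mul_of_le_analyticOrderAt hF fun s hs =>
    (natCast_le_analyticOrderAt_iff_iteratedDeriv_eq_zero (hF.analyticAt s)).2 (hzero s hs)
  have hQ : Differentiable ℂ fun z => (∏ s ∈ S.erase s₀, (z - s)) ^ r * G z := by fun_prop
  have hFQ : F = fun z => (z - s₀) ^ r * ((∏ s ∈ S.erase s₀, (z - s)) ^ r * G z) := by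
    funext z
    rw [hFG, ← Finset.mul_prod_erase S _ hs₀, mul_pow, mul_assoc]
  have hGs₀ : ‖G s₀‖ ≤ B / (R - ρ) ^ (S.card * r) :=
    norm_le_div_pow_of_prod_sub_pow_mul_norm_le hG hρR hS (fun z hz => hFG z ▸ hB z hz) (hS s₀ hs₀)
  rw [hFQ, iteratedDeriv_sub_pow_mul_self hQ, norm_mul, norm_mul, norm_pow, norm_prod,
    Complex.norm_natCast]
  gcongr

end EntireZeros

/-! ### The Gelfond–Schneider theorem -/

section GelfondSchneider

open NumberField Finset

theorem exists_const_forall_exists_mulVec_eq_zero (K : Type*) [Field K] [NumberField K] :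
    ∃ C : ℝ, 1 ≤ C ∧ ∀ (α β : Type) [Fintype α] [Fintype β] [Nonempty α]
      (a : Matrix α β (𝓞 K)) (A : ℝ), a ≠ 0 → Fintype.card β = 2 * Fintype.card α →
      (∀ k l, house (a k l : K) ≤ A) →
      ∃ ξ : β → 𝓞 K, ξ ≠ 0 ∧ a.mulVec ξ = 0 ∧
        ∀ l, house (ξ l : K) ≤ C * (Fintype.card β * A) := by
  classical
  -- The constant of Mathlib's Siegel lemma is private, so it can only be named by unification.
  obtain ⟨c, hc⟩ : ∃ c : ℝ, ∀ (α β : Type) [Fintype α] [Fintype β]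
      (a : Matrix α β (𝓞 K)) (A : ℝ), a ≠ 0 → 0 < Fintype.card α →
      Fintype.card α < Fintype.card β → (∀ k l, house (a k l : K) ≤ A) →
      ∃ ξ : β → 𝓞 K, ξ ≠ 0 ∧ a.mulVec ξ = 0 ∧ ∀ l, house (ξ l : K) ≤
        c * (c * Fintype.card β * A) ^
          ((Fintype.card α : ℝ) / (Fintype.card β - Fintype.card α)) :=
    ⟨_, fun α β _ _ a A ha hpos hlt hA =>
      house.exists_ne_zero_int_vec_house_le K a ha hpos hlt rfl hA rfl⟩
  refine ⟨max 1 (c * c), le_max_left _ _, fun α β _ _ _ a A ha hcard hA => ?_⟩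
  have hpos : 0 < Fintype.card α := Fintype.card_pos
  obtain ⟨ξ, hξ, haξ, hbound⟩ := hc α β a A ha hpos (by omega) hA
  have hexponent : (Fintype.card α : ℝ) / (Fintype.card β - Fintype.card α) = 1 := by
    rw [hcard, Nat.cast_mul, Nat.cast_two, two_mul, add_sub_cancel_right]
    exact div_self (Nat.cast_ne_zero.2 hpos.ne')
  refine ⟨ξ, hξ, haξ, fun l => (hbound l).trans ?_⟩
  have hA₀ : 0 ≤ A := (house_nonneg _).trans (hA (Classical.arbitrary α) l)
  calc c * (c * Fintype.card β * A) ^ ((Fintype.card α : ℝ) / (Fintype.card β - Fintype.card α))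
      = c * c * (Fintype.card β * A) := by rw [hexponent, Real.rpow_one]; ring
    _ ≤ max 1 (c * c) * (Fintype.card β * A) := by gcongr; exact le_max_right _ _

theorem mul_natCast_le_two_mul_pow {A : ℝ} (hA : 1 ≤ A) {r : ℕ} (hr : r ≠ 0) :
    A * r ≤ (2 * A) ^ r := by
  have hr2 : (r : ℝ) ≤ 2 ^ r := by exact_mod_cast Nat.lt_two_pow_self.le
  calc A * r ≤ A ^ r * 2 ^ r := by gcongr; exact le_self_pow₀ hA hr
    _ = (2 * A) ^ r := by rw [← mul_pow, mul_comm]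

theorem le_mul_sqrt_of_sq_le_mul {q c r : ℝ} (hc : 1 ≤ c) (hr : 0 ≤ r) (h : q ^ 2 ≤ c * r) :
    q ≤ c * √r := by
  refine le_of_sq_le_sq ?_ (by positivity)
  rw [mul_pow, Real.sq_sqrt hr]
  nlinarith

theorem sq_mul_div_pow_le {s q c : ℝ} (hs : 0 < s) (hq : 0 < q) (hqs : q ≤ c * s) (k : ℕ) :
    s ^ 2 * q / (s ^ 2 / q) ^ (2 * k + 4) ≤ c ^ (2 * k + 5) / s ^ (2 * k + 1) := by
  calc s ^ 2 * q / (s ^ 2 / q) ^ (2 * k + 4) = s ^ 2 * q ^ (2 * k + 5) / s ^ (2 * (2 * k + 4)) := by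
        rw [div_pow, pow_mul]; field_simp; ring
    _ ≤ s ^ 2 * (c * s) ^ (2 * k + 5) / s ^ (2 * (2 * k + 4)) := by gcongr
    _ = c ^ (2 * k + 5) / s ^ (2 * k + 1) := by rw [mul_pow]; field_simp; ring

theorem le_mul_pow_of_one_le_mul_pow {s x y X Y : ℝ} {k r : ℕ} (hs : 0 < s) (hr : r ≠ 0)
    (hX : 0 ≤ X) (hY : 0 ≤ Y) (hy₀ : 0 ≤ y) (hxX : x ≤ (X / s ^ (2 * k + 1)) ^ r)
    (hyY : y ≤ (Y * s ^ 2) ^ r) (hxy : 1 ≤ x * y ^ k) : s ≤ X * Y ^ k := by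
  have hpow : 1 ≤ (X * Y ^ k / s) ^ r :=
    calc 1 ≤ x * y ^ k := hxy
      _ ≤ (X / s ^ (2 * k + 1)) ^ r * ((Y * s ^ 2) ^ r) ^ k := by gcongr
      _ = (X * Y ^ k / s) ^ r := by
        rw [pow_right_comm, ← mul_pow]
        congr 1
        rw [mul_pow, ← pow_mul]
        field_simp
        ring
  exact (one_le_div hs).1 ((one_le_pow_iff_of_nonneg (by positivity) hr).1 hpow)

theorem prod_erase_norm_natCast_sub_le {l m : ℕ} (hl : l < m) :
    ∏ s ∈ ((range m).image ((↑) : ℕ → ℂ)).erase l, ‖(l : ℂ) - s‖ ≤ (m : ℝ) ^ m := by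
  have hm : (1 : ℝ) ≤ m := by exact_mod_cast Nat.one_le_of_lt hl
  have hfactor : ∀ s ∈ ((range m).image ((↑) : ℕ → ℂ)).erase l, ‖(l : ℂ) - s‖ ≤ m := by
    intro s hs
    obtain ⟨k, hk, rfl⟩ := mem_image.1 (mem_of_mem_erase hs)
    have hdist : |(l : ℤ) - k| ≤ m := by rw [abs_le]; grind
    rw [← Int.cast_natCast l, ← Int.cast_natCast k, ← Int.cast_sub, Complex.norm_intCast]
    exact_mod_cast hdist
  refine (prod_le_prod (fun s _ => norm_nonneg _) hfactor).trans ?_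
  rw [prod_const]
  refine pow_le_pow_right₀ hm ((card_erase_le.trans card_image_le).trans_eq (card_range m))

variable {K : Type*} [Field K] {ι : Type*} [Fintype ι] {μ e η : ι → 𝓞 K}

/-- Up to the factors `w ^ a` and `c ^ l` of `pow_mul_iteratedDeriv_expSum`, the `a`-th derivative
at the integer `l` of the exponential sum with coefficients `η` and frequencies `μ x * w`, where
`e x` plays the role of `exp (μ x * w)`. -/
def expForm (μ e η : ι → 𝓞 K) (a l : ℕ) : 𝓞 K :=
  ∑ x, η x * (μ x ^ a * e x ^ l)

/-- The auxiliary function of the Gelfond–Schneider method: the exponential sum with coefficients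
`η` and frequencies `μ x * w`, under the complex embedding `σ`. -/
noncomputable def expSum (σ : K →+* ℂ) (w : ℂ) (μ η : ι → 𝓞 K) (z : ℂ) : ℂ :=
  ∑ x, σ (η x) * Complex.exp (σ (μ x) * w * z)

theorem differentiable_expSum (σ : K →+* ℂ) (w : ℂ) (μ η : ι → 𝓞 K) :
    Differentiable ℂ (expSum σ w μ η) := by
  unfold expSum
  fun_prop

theorem pow_mul_iteratedDeriv_expSum (σ : K →+* ℂ) {w c : ℂ}
    (he : ∀ x, σ (e x) = c * Complex.exp (σ (μ x) * w)) (η : ι → 𝓞 K) (a l : ℕ) :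
    c ^ l * iteratedDeriv a (expSum σ w μ η) l = w ^ a * σ (expForm μ e η a l) := by
  unfold expSum
  rw [iteratedDeriv_fun_sum fun x _ => by fun_prop]
  simp only [expForm, map_sum, map_mul, map_pow, mul_sum, he]
  refine sum_congr rfl fun x _ => ?_
  have hexp : Complex.exp (σ (μ x) * w * l) = Complex.exp (σ (μ x) * w) ^ l := by
    rw [mul_comm, Complex.exp_nat_mul]
  simp only [iteratedDeriv_const_mul_field, iteratedDeriv_cexp_const_mul, hexp]
  ring

theorem exists_expForm_zero_ne_zero (hμ : Function.Injective μ) (e : ι → 𝓞 K) (hη : η ≠ 0) :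
    ∃ r, expForm μ e η r 0 ≠ 0 := by
  by_contra! hzero
  let enum := (Fintype.equivFin ι).symm
  have hη_enum : η ∘ enum = 0 := by
    refine Matrix.eq_zero_of_forall_pow_sum_mul_pow_eq_zero (hμ.comp enum.injective) fun a => ?_
    rw [← hzero a]
    exact Fintype.sum_equiv enum _ _ fun i => by simp
  exact hη (funext fun x => by simpa [enum] using congrFun hη_enum (enum.symm x))

theorem exists_minimal_order_expForm_ne_zero {n m : ℕ} (hm : 1 ≤ m) (hμ : Function.Injective μ)
    (hη : η ≠ 0) (hzero : ∀ a < n, ∀ l < m, expForm μ e η a l = 0) :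
    ∃ r, n ≤ r ∧ (∀ l < m, ∀ a < r, expForm μ e η a l = 0) ∧ ∃ l < m, expForm μ e η r l ≠ 0 := by
  classical
  have hex : ∃ r, ∃ l < m, expForm μ e η r l ≠ 0 := by
    obtain ⟨r, hr⟩ := exists_expForm_zero_ne_zero hμ e hη
    exact ⟨r, 0, hm, hr⟩
  refine ⟨Nat.find hex, (Nat.le_find_iff hex n).2 fun a ha => ?_, fun l hl a ha => ?_,
    Nat.find_spec hex⟩
  · rintro ⟨l, hl, hne⟩
    exact hne (hzero a ha l hl)
  · by_contra hne
    exact Nat.find_min hex ha ⟨l, hl, hne⟩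

variable [NumberField K]

theorem one_le_norm_embedding_mul_house_pow (σ : K →+* ℂ) {x : 𝓞 K} (hx : x ≠ 0) :
    1 ≤ ‖σ x‖ * house (x : K) ^ (Module.finrank ℚ K - 1) := by
  refine le_trans ?_ (norm_norm_le_norm_mul_house_pow (x : K) σ)
  have hnorm : (1 : ℝ) ≤ |(Algebra.norm ℤ x : ℝ)| := by
    exact_mod_cast Int.one_le_abs (Algebra.norm_ne_zero_iff.2 hx)
  rw [← Algebra.coe_norm_int, ← Rat.norm_cast_real]
  simpa using hnorm

theorem norm_expSum_le (σ : K →+* ℂ) (w : ℂ) {D M : ℝ} (hη : ∀ x, house (η x : K) ≤ D)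
    (hμ : ∀ x, house (μ x : K) ≤ M) (z : ℂ) :
    ‖expSum σ w μ η z‖ ≤ Fintype.card ι * (D * Real.exp (M * ‖w‖ * ‖z‖)) := by
  rw [← nsmul_eq_mul]
  refine norm_sum_le_of_le _ (fun x _ => ?_) |>.trans_eq (by rw [sum_const, card_univ])
  have hD : 0 ≤ D := (house_nonneg _).trans (hη x)
  have hexp : ‖Complex.exp (σ (μ x) * w * z)‖ ≤ Real.exp (M * ‖w‖ * ‖z‖) := by
    rw [Complex.norm_exp]
    refine Real.exp_le_exp.2 ((Complex.re_le_norm _).trans ?_)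
    rw [norm_mul, norm_mul]
    gcongr
    exact (norm_embedding_le_house _ σ).trans (hμ x)
  rw [norm_mul]
  exact mul_le_mul ((norm_embedding_le_house _ σ).trans (hη x)) hexp (norm_nonneg _) hD

theorem house_expForm_le {a l : ℕ} {D E : ℝ} (hη : ∀ x, house (η x : K) ≤ D)
    (hE : ∀ x, house ((μ x ^ a * e x ^ l : 𝓞 K) : K) ≤ E) :
    house (expForm μ e η a l : K) ≤ Fintype.card ι * (D * E) := by
  have hcoe : (expForm μ e η a l : K) =
      ∑ x, (η x : K) * ((μ x ^ a * e x ^ l : 𝓞 K) : K) := by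
    simp only [expForm, map_sum, map_mul]
  rw [hcoe, ← nsmul_eq_mul]
  calc house (∑ x, (η x : K) * ((μ x ^ a * e x ^ l : 𝓞 K) : K))
      ≤ ∑ x, house ((η x : K) * ((μ x ^ a * e x ^ l : 𝓞 K) : K)) := house_sum_le_sum_house _ _
    _ ≤ ∑ _x : ι, D * E := sum_le_sum fun x _ => (house_mul_le _ _).trans <|
        mul_le_mul (hη x) (hE x) (house_nonneg _) ((house_nonneg _).trans (hη x))
    _ = Fintype.card ι • (D * E) := by rw [sum_const, card_univ]

theorem house_pow_mul_pow_le {H : ℝ} (hH : 1 ≤ H) {q m r a l : ℕ} (hq : 1 ≤ q) (hqr : q ≤ r)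
    (ha : a ≤ r) (hl : l ≤ m) {u v : 𝓞 K} (hu : house (u : K) ≤ H * q)
    (hv : house (v : K) ≤ H ^ q) :
    house ((u ^ a * v ^ l : 𝓞 K) : K) ≤ (H ^ (m + 1) * q) ^ r := by
  have hq₁ : (1 : ℝ) ≤ q := by exact_mod_cast hq
  simp only [map_mul, map_pow]
  calc house ((u : K) ^ a * (v : K) ^ l) ≤ house (u : K) ^ a * house (v : K) ^ l :=
        (house_mul_le _ _).trans <| mul_le_mul (house_pow_le _ _) (house_pow_le _ _)
          (house_nonneg _) (pow_nonneg (house_nonneg _) _)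
    _ ≤ (H * q) ^ a * (H ^ q) ^ l := by
        gcongr
        exacts [pow_nonneg (house_nonneg _) _, house_nonneg _, house_nonneg _]
    _ ≤ (H * q) ^ r * (H ^ r) ^ m := by
        refine mul_le_mul (pow_le_pow_right₀ (one_le_mul_of_one_le_of_one_le hH hq₁) ha) ?_
          (by positivity) (by positivity)
        exact (pow_le_pow_left₀ (by positivity) (pow_le_pow_right₀ hH hqr) l).trans
          (pow_le_pow_right₀ (one_le_pow₀ hH) hl)
    _ = (H ^ (m + 1) * q) ^ r := by rw [pow_right_comm, ← mul_pow]; ring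

theorem exists_const_forall_exists_expForm_eq_zero (K : Type*) [Field K] [NumberField K] {m : ℕ}
    (hm : 1 ≤ m) {H : ℝ} (hH : 1 ≤ H) :
    ∃ C : ℝ, 1 ≤ C ∧ ∀ (ι : Type) [Fintype ι] (μ e : ι → 𝓞 K) (q n : ℕ), 1 ≤ q → q ≤ n →
      Fintype.card ι = q ^ 2 → q ^ 2 = 2 * m * n → (∀ x, house (μ x : K) ≤ H * q) →
      (∀ x, house (e x : K) ≤ H ^ q) →
      ∃ η : ι → 𝓞 K, η ≠ 0 ∧ (∀ a < n, ∀ l < m, expForm μ e η a l = 0) ∧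
        ∀ x, house (η x : K) ≤ (C * q) ^ n := by
  obtain ⟨C, hC, hsiegel⟩ := exists_const_forall_exists_mulVec_eq_zero K
  have hm₁ : (1 : ℝ) ≤ 2 * m := by exact_mod_cast (by omega : 1 ≤ 2 * m)
  have hconst : 1 ≤ C * (2 * (2 * m)) * H ^ (m + 1) :=
    one_le_mul_of_one_le_of_one_le
      (one_le_mul_of_one_le_of_one_le hC (by linarith)) (one_le_pow₀ hH)
  refine ⟨_, hconst, fun ι _ μ e q n hq hqn hcard hqm hμ he => ?_⟩
  have : Nonempty (Fin n × Fin m) := ⟨⟨⟨0, by omega⟩, ⟨0, by omega⟩⟩⟩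
  have hι : 0 < Fintype.card ι := hcard ▸ pow_pos hq 2
  obtain ⟨x₀⟩ := Fintype.card_pos_iff.1 hι
  let coeff : Matrix (Fin n × Fin m) ι (𝓞 K) :=
    Matrix.of fun y x => μ x ^ (y.1 : ℕ) * e x ^ (y.2 : ℕ)
  have hcoeff : coeff ≠ 0 := fun h => by
    simpa [coeff] using congrFun₂ h (⟨0, by omega⟩, ⟨0, by omega⟩) x₀
  obtain ⟨η, hη, hsol, hhouse⟩ := hsiegel _ ι coeff ((H ^ (m + 1) * q) ^ n) hcoeff
    (by rw [hcard, hqm, Fintype.card_prod, Fintype.card_fin, Fintype.card_fin]; ring)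
    fun y x => house_pow_mul_pow_le hH hq hqn y.1.2.le y.2.2.le (hμ x) (he x)
  refine ⟨η, hη, fun a ha l hl => ?_, fun x => (hhouse x).trans ?_⟩
  · simpa [expForm, Matrix.mulVec, dotProduct, coeff, mul_comm] using
      congrFun hsol (⟨a, ha⟩, ⟨l, hl⟩)
  · have hcard_le : (Fintype.card ι : ℝ) ≤ (2 * (2 * m)) ^ n := by
      rw [hcard, hqm]
      exact_mod_cast mul_natCast_le_two_mul_pow hm₁ (by omega)
    calc C * (Fintype.card ι * (H ^ (m + 1) * q) ^ n)
        ≤ C ^ n * ((2 * (2 * m)) ^ n * (H ^ (m + 1) * q) ^ n) := by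
          gcongr
          exact le_self_pow₀ hC (by omega)
      _ = (C * (2 * (2 * m)) * H ^ (m + 1) * q) ^ n := by simp only [← mul_pow]; ring

/-- The radius `m + r / q` balances the growth of the exponentials, of type `O(q)`, against the
gain `(r / q) ^ (m * r)` from the `m` zeros of order `r`. -/
theorem norm_iteratedDeriv_expSum_le (σ : K →+* ℂ) (w : ℂ) {q m r : ℕ} (hq : 1 ≤ q) (hqr : q ≤ r)
    {A D H : ℝ} (hA : 0 ≤ A) (hD : 0 ≤ D) (hH : 0 ≤ H) (hcard : Fintype.card ι ≤ A ^ r)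
    (hη : ∀ x, house (η x : K) ≤ D ^ r) (hμ : ∀ x, house (μ x : K) ≤ H * q)
    (hzero : ∀ l < m, ∀ a < r, iteratedDeriv a (expSum σ w μ η) l = 0) {l : ℕ} (hl : l < m) :
    ‖iteratedDeriv r (expSum σ w μ η) l‖ ≤
      (r * (m ^ m * (A * (D * Real.exp (H * ‖w‖ * (m + 1))) / (r / q) ^ m))) ^ r := by
  have hq₀ : (0 : ℝ) < q := by exact_mod_cast hq
  have hqr' : (q : ℝ) ≤ r := by exact_mod_cast hqr
  have hr₀ : (0 : ℝ) < r := hq₀.trans_le hqr'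
  have hexp : Real.exp (H * q * ‖w‖ * (m + r / q)) ≤ Real.exp (H * ‖w‖ * (m + 1)) ^ r := by
    rw [← Real.exp_nat_mul, Real.exp_le_exp]
    calc H * q * ‖w‖ * (m + r / q) = H * ‖w‖ * (m * q + r) := by field_simp
      _ ≤ H * ‖w‖ * (m * r + r) := by gcongr
      _ = r * (H * ‖w‖ * (m + 1)) := by ring
  have hcircle : ∀ z : ℂ, ‖z‖ = m + r / q → ‖expSum σ w μ η z‖ ≤
      A ^ r * (D ^ r * Real.exp (H * ‖w‖ * (m + 1)) ^ r) := by
    intro z hz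
    refine (norm_expSum_le σ w hη hμ z).trans ?_
    rw [hz]
    gcongr
  have hschwarz := norm_iteratedDeriv_le_of_iteratedDeriv_eq_zero (differentiable_expSum σ w μ η)
    (S := (range m).image (↑)) (r := r) (ρ := m) (R := m + r / q)
    (by simpa using div_pos hr₀ hq₀) (by simpa using fun k hk => hk.le) (by simpa using hzero)
    hcircle (mem_image_of_mem _ (mem_range.2 hl))
  rw [card_image_of_injective _ Nat.cast_injective, card_range, add_sub_cancel_left] at hschwarz
  refine hschwarz.trans ?_
  calc _ ≤ (r : ℝ) ^ r * ((m ^ m) ^ r *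
        (A ^ r * (D ^ r * Real.exp (H * ‖w‖ * (m + 1)) ^ r) / (r / q : ℝ) ^ (m * r))) := by
        gcongr
        · exact_mod_cast Nat.factorial_le_pow r
        · exact prod_erase_norm_natCast_sub_le hl
    _ = _ := by rw [pow_mul (r / q : ℝ)]; simp only [← mul_pow, ← div_pow]

theorem norm_embedding_expForm_le (σ : K →+* ℂ) {w c : ℂ} (hw : w ≠ 0) (hc : c ≠ 0)
    (he : ∀ x, σ (e x) = c * Complex.exp (σ (μ x) * w)) {q m r : ℕ} (hq : 1 ≤ q) (hqr : q ≤ r)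
    {A D H : ℝ} (hA : 0 ≤ A) (hD : 0 ≤ D) (hH : 1 ≤ H) (hcH : ‖c‖ ≤ H ^ q)
    (hcard : Fintype.card ι ≤ A ^ r)
    (hη : ∀ x, house (η x : K) ≤ D ^ r) (hμ : ∀ x, house (μ x : K) ≤ H * q)
    (hzero : ∀ l < m, ∀ a < r, expForm μ e η a l = 0) {l : ℕ} (hl : l < m) :
    ‖σ (expForm μ e η r l)‖ ≤ (H ^ m *
      (r * (m ^ m * (A * (D * Real.exp (H * ‖w‖ * (m + 1))) / (r / q) ^ m))) / ‖w‖) ^ r := by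
  have hderiv : ∀ l < m, ∀ a < r, iteratedDeriv a (expSum σ w μ η) l = 0 := by
    intro l hl a ha
    have hprod := pow_mul_iteratedDeriv_expSum σ he η a l
    rw [hzero l hl a ha] at hprod
    simpa [hc] using hprod
  have hcl : ‖c‖ ^ l ≤ (H ^ m) ^ r :=
    calc ‖c‖ ^ l ≤ (H ^ q) ^ l := by gcongr
      _ ≤ (H ^ r) ^ m := (pow_le_pow_left₀ (by positivity) (pow_le_pow_right₀ hH hqr) l).trans
          (pow_le_pow_right₀ (one_le_pow₀ hH) hl.le)
      _ = (H ^ m) ^ r := pow_right_comm _ _ _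
  rw [div_pow, le_div_iff₀ (by positivity), mul_comm, ← norm_pow, ← norm_mul,
    ← pow_mul_iteratedDeriv_expSum σ he, norm_mul, norm_pow, mul_pow (H ^ m)]
  exact mul_le_mul hcl (norm_iteratedDeriv_expSum_le σ w hq hqr hA hD (zero_le_one.trans hH) hcard
    hη hμ hderiv hl) (norm_nonneg _) (by positivity)

/-- If `r` is the first order at which some form does not vanish, the lower bound coming from the
norm of that algebraic integer contradicts the analytic upper bound as soon as `r` is large. -/
theorem exists_const_forall_sqrt_le_of_expForm_ne_zero (σ : K →+* ℂ) {w : ℂ} (hw : w ≠ 0)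
    {H C : ℝ} (hH : 1 ≤ H) (hC : 1 ≤ C) {m : ℕ} (hm : m = 2 * Module.finrank ℚ K + 2) :
    ∃ T : ℝ, ∀ (ι : Type) [Fintype ι] (μ e η : ι → 𝓞 K) (c : ℂ) (q r l : ℕ), 1 ≤ q → q ≤ r →
      Fintype.card ι = q ^ 2 → q ^ 2 ≤ 2 * m * r → c ≠ 0 → ‖c‖ ≤ H ^ q →
      (∀ x, σ (e x) = c * Complex.exp (σ (μ x) * w)) → (∀ x, house (μ x : K) ≤ H * q) →
      (∀ x, house (e x : K) ≤ H ^ q) → (∀ x, house (η x : K) ≤ (C * q) ^ r) →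
      (∀ l < m, ∀ a < r, expForm μ e η a l = 0) → l < m → expForm μ e η r l ≠ 0 → √r ≤ T := by
  have hdeg : 1 ≤ Module.finrank ℚ K := Module.finrank_pos
  obtain ⟨k, hk⟩ := Nat.exists_eq_add_of_le' hdeg
  set A : ℝ := 2 * (2 * m)
  set E : ℝ := Real.exp (H * ‖w‖ * (m + 1))
  refine ⟨H ^ m * m ^ m * A * C * E / ‖w‖ * (2 * m) ^ (2 * k + 5) *
    (A * C * H ^ (m + 1) * (2 * m) ^ 2) ^ k,
    fun ι _ μ e η c q r l hq hqr hcard hqm hc hcH he hμ heH hη hzero hl hne => ?_⟩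
  have hm₁ : (1 : ℝ) ≤ 2 * m := by exact_mod_cast (by omega : 1 ≤ 2 * m)
  have hq₀ : (0 : ℝ) < q := by exact_mod_cast hq
  have hr₀ : (0 : ℝ) < r := by exact_mod_cast (by omega : 0 < r)
  have hs₀ : 0 < √(r : ℝ) := Real.sqrt_pos.2 hr₀
  have hqr2 : (q : ℝ) ^ 2 ≤ 2 * m * r := by exact_mod_cast hqm
  have hqs : (q : ℝ) ≤ 2 * m * √r := le_mul_sqrt_of_sq_le_mul hm₁ hr₀.le hqr2
  have hcardA : (Fintype.card ι : ℝ) ≤ A ^ r := by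
    rw [hcard, Nat.cast_pow]
    exact hqr2.trans (mul_natCast_le_two_mul_pow hm₁ (by omega))
  have hx := norm_embedding_expForm_le σ hw hc he hq hqr (by positivity) (by positivity) hH hcH
    hcardA hη hμ hzero hl
  have hy := house_expForm_le hη fun x => house_pow_mul_pow_le hH hq hqr le_rfl hl.le (hμ x) (heH x)
  refine le_mul_pow_of_one_le_mul_pow (r := r) hs₀ (by omega) (by positivity) (by positivity)
    (house_nonneg _) (hx.trans ?_) (hy.trans ?_)
    (by simpa [hk] using one_le_norm_embedding_mul_house_pow σ hne)
  · refine pow_le_pow_left₀ (by positivity) ?_ r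
    calc _ = H ^ m * m ^ m * A * C * E / ‖w‖ * (√r ^ 2 * q / (√r ^ 2 / q) ^ (2 * k + 4)) := by
          rw [Real.sq_sqrt hr₀.le, ← show m = 2 * k + 4 by omega]
          ring
      _ ≤ H ^ m * m ^ m * A * C * E / ‖w‖ * ((2 * m) ^ (2 * k + 5) / √r ^ (2 * k + 1)) :=
          mul_le_mul_of_nonneg_left (sq_mul_div_pow_le hs₀ hq₀ hqs k) (by positivity)
      _ = _ := by ring
  · calc Fintype.card ι * ((C * q) ^ r * (H ^ (m + 1) * q) ^ r)
        ≤ A ^ r * ((C * q) ^ r * (H ^ (m + 1) * q) ^ r) := by gcongr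
      _ = (A * C * H ^ (m + 1) * q ^ 2) ^ r := by simp only [← mul_pow]; ring
      _ ≤ (A * C * H ^ (m + 1) * (2 * m * √r) ^ 2) ^ r := by gcongr
      _ = (A * C * H ^ (m + 1) * (2 * m) ^ 2 * √r ^ 2) ^ r := by ring

theorem exists_const_forall_sqrt_le_of_injective (σ : K →+* ℂ) {w : ℂ} (hw : w ≠ 0)
    {H : ℝ} (hH : 1 ≤ H) {m : ℕ} (hm : m = 2 * Module.finrank ℚ K + 2) :
    ∃ T : ℝ, ∀ (ι : Type) [Fintype ι] (μ e : ι → 𝓞 K) (c : ℂ) (q n : ℕ), 1 ≤ q → q ≤ n →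
      Fintype.card ι = q ^ 2 → q ^ 2 = 2 * m * n → c ≠ 0 → ‖c‖ ≤ H ^ q →
      (∀ x, σ (e x) = c * Complex.exp (σ (μ x) * w)) → (∀ x, house (μ x : K) ≤ H * q) →
      (∀ x, house (e x : K) ≤ H ^ q) → Function.Injective μ → √n ≤ T := by
  obtain ⟨C, hC, hsiegel⟩ := exists_const_forall_exists_expForm_eq_zero K (by omega : 1 ≤ m) hH
  obtain ⟨T, hT⟩ := exists_const_forall_sqrt_le_of_expForm_ne_zero σ hw hH hC hm
  refine ⟨T, fun ι _ μ e c q n hq hqn hcard hqm hc hcH he hμH heH hμ => ?_⟩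
  obtain ⟨η, hη, hzero, hηC⟩ := hsiegel ι μ e q n hq hqn hcard hqm hμH heH
  obtain ⟨r, hnr, hzero', l, hl, hne⟩ :=
    exists_minimal_order_expForm_ne_zero (by omega) hμ hη hzero
  have hCq : 1 ≤ C * q := one_le_mul_of_one_le_of_one_le hC (by exact_mod_cast hq)
  calc √(n : ℝ) ≤ √r := Real.sqrt_le_sqrt (by exact_mod_cast hnr)
    _ ≤ T := hT ι μ e η c q r l hq (hqn.trans hnr) hcard (hqm.trans_le (by gcongr)) hc hcH he hμH
      heH (fun x => (hηC x).trans (pow_le_pow_right₀ hCq hnr)) hzero' hl hne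

theorem house_natCast_mul_add_le {A : ℝ} {b₁ b₂ : K} (h₁ : house b₁ ≤ A) (h₂ : house b₂ ≤ A)
    {j k q : ℕ} (hj : j ≤ q) (hk : k ≤ q) : house (j * b₁ + k * b₂) ≤ 2 * A * q :=
  calc house (j * b₁ + k * b₂) ≤ j * house b₁ + k * house b₂ := by
        simpa only [house_nat_mul] using house_add_le (j * b₁) (k * b₂)
    _ ≤ q * A + q * A := by gcongr <;> exact house_nonneg _
    _ = 2 * A * q := by ring

theorem house_pow_mul_pow_sub_le {A : ℝ} {u δ : K} (hu : house u ≤ A) (hδ : house δ ≤ A)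
    {j q : ℕ} (hj : j ≤ q) : house (u ^ j * δ ^ (q - j)) ≤ A ^ q := by
  have hA : 0 ≤ A := (house_nonneg u).trans hu
  calc house (u ^ j * δ ^ (q - j)) ≤ house u ^ j * house δ ^ (q - j) :=
        (house_mul_le _ _).trans <| mul_le_mul (house_pow_le _ _) (house_pow_le _ _)
          (house_nonneg _) (pow_nonneg (house_nonneg _) _)
    _ ≤ A ^ j * A ^ (q - j) := by
        gcongr
        exacts [pow_nonneg (house_nonneg _) _, house_nonneg _, house_nonneg _]
    _ = A ^ q := by rw [← pow_add, Nat.add_sub_cancel' hj]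

theorem pow_mul_pow_sub_eq_pow_mul_exp {u δ s : ℂ} (h : u = δ * Complex.exp s) {j q : ℕ}
    (hj : j ≤ q) : u ^ j * δ ^ (q - j) = δ ^ q * Complex.exp (j * s) := by
  rw [h, mul_pow, mul_right_comm, ← pow_add, Nat.add_sub_cancel' hj, Complex.exp_nat_mul]

theorem exists_const_forall_sqrt_le_of_embedding_eq_mul_exp (σ : K →+* ℂ) {w : ℂ} (hw : w ≠ 0)
    {b₁ b₂ u₁ u₂ δ : 𝓞 K} (hδ : δ ≠ 0)
    (hb : Function.Injective fun x : ℕ × ℕ => (x.1 : 𝓞 K) * b₁ + x.2 * b₂)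
    (h₁ : σ u₁ = σ δ * Complex.exp (σ b₁ * w)) (h₂ : σ u₂ = σ δ * Complex.exp (σ b₂ * w)) {m : ℕ}
    (hm : m = 2 * Module.finrank ℚ K + 2) :
    ∃ T : ℝ, ∀ q n : ℕ, 1 ≤ q → q ≤ n → q ^ 2 = 2 * m * n → √n ≤ T := by
  obtain ⟨A, hA, hb₁, hb₂, hu₁, hu₂, hδA⟩ : ∃ A : ℝ, 1 ≤ A ∧ house (b₁ : K) ≤ A ∧
      house (b₂ : K) ≤ A ∧ house (u₁ : K) ≤ A ∧ house (u₂ : K) ≤ A ∧ house (δ : K) ≤ A := by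
    have hbdd := (Set.toFinite {1, house (b₁ : K), house (b₂ : K), house (u₁ : K),
      house (u₂ : K), house (δ : K)}).bddAbove
    exact hbdd.imp fun A hA => by simpa [upperBounds] using hA
  obtain ⟨T, hT⟩ := exists_const_forall_sqrt_le_of_injective σ hw (H := 2 * A ^ 2) (by nlinarith) hm
  have hAH (q : ℕ) : A ^ q * A ^ q ≤ (2 * A ^ 2) ^ q := by
    rw [← mul_pow, ← sq]
    gcongr
    linarith [sq_nonneg A]
  refine ⟨T, fun q n hq hqn hqm => hT (Fin q × Fin q) (fun x => (x.1 : ℕ) * b₁ + (x.2 : ℕ) * b₂)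
    (fun x => u₁ ^ (x.1 : ℕ) * δ ^ (q - x.1) * (u₂ ^ (x.2 : ℕ) * δ ^ (q - x.2)))
    (σ δ ^ q * σ δ ^ q) q n hq hqn ?_ hqm ?_ ?_ (fun x => ?_) (fun x => ?_) (fun x => ?_) ?_⟩
  · rw [Fintype.card_prod, Fintype.card_fin, sq]
  · simp [hδ]
  · have hσδ : ‖σ δ‖ ≤ A := (norm_embedding_le_house _ σ).trans hδA
    rw [norm_mul, norm_pow]
    exact (mul_le_mul (by gcongr) (by gcongr) (by positivity) (by positivity)).trans (hAH q)
  · simp only [map_mul, map_pow, map_add, map_natCast, add_mul, Complex.exp_add]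
    rw [pow_mul_pow_sub_eq_pow_mul_exp h₁ x.1.2.le, pow_mul_pow_sub_eq_pow_mul_exp h₂ x.2.2.le,
      mul_mul_mul_comm, mul_assoc (x.1 : ℂ), mul_assoc (x.2 : ℂ)]
  · simp only [map_mul, map_add, map_natCast]
    refine (house_natCast_mul_add_le hb₁ hb₂ x.1.2.le x.2.2.le).trans ?_
    gcongr
    exact le_self_pow₀ hA two_ne_zero
  · simp only [map_mul, map_pow]
    exact (house_mul_le _ _).trans <| (mul_le_mul (house_pow_mul_pow_sub_le hu₁ hδA x.1.2.le)
      (house_pow_mul_pow_sub_le hu₂ hδA x.2.2.le) (house_nonneg _) (by positivity)).trans (hAH q)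
  · exact hb.comp (Fin.val_injective.prodMap Fin.val_injective)

/-- The Gelfond–Schneider theorem for algebraic integers, with `δ` a common denominator of the
two exponentials. -/
theorem embedding_ne_mul_exp_of_embedding_eq_mul_exp (σ : K →+* ℂ) {w : ℂ} (hw : w ≠ 0)
    {b₁ b₂ u₁ u₂ δ : 𝓞 K} (hδ : δ ≠ 0)
    (hb : Function.Injective fun x : ℕ × ℕ => (x.1 : 𝓞 K) * b₁ + x.2 * b₂)
    (h₁ : σ u₁ = σ δ * Complex.exp (σ b₁ * w)) : σ u₂ ≠ σ δ * Complex.exp (σ b₂ * w) := by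
  intro h₂
  obtain ⟨T, hT⟩ := exists_const_forall_sqrt_le_of_embedding_eq_mul_exp σ hw hδ hb h₁ h₂ rfl
  set m := 2 * Module.finrank ℚ K + 2
  have hm : 1 ≤ m := by omega
  obtain ⟨t, ht⟩ := exists_nat_gt (max 1 T)
  have ht₁ : 1 ≤ t := by exact_mod_cast ((le_max_left 1 T).trans_lt ht).le
  have hsqrt := hT (2 * m * t) (2 * m * t ^ 2) (by nlinarith) (by gcongr; nlinarith) (by ring)
  have hle : (t : ℝ) ≤ √(2 * m * t ^ 2 : ℕ) :=
    Real.le_sqrt_of_sq_le (by exact_mod_cast Nat.le_mul_of_pos_left _ (by omega))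
  exact ((le_max_right 1 T).trans_lt ht).not_ge (hle.trans hsqrt)

theorem exists_numberField_forall_exists_eq_intCast_mul (S : Finset ℂ)
    (hS : ∀ s ∈ S, IsAlgebraic ℚ s) :
    ∃ (K : IntermediateField ℚ ℂ) (_ : NumberField K) (y : ℤ), y ≠ 0 ∧
      ∀ s ∈ S, ∃ x : 𝓞 K, algebraMap K ℂ x = y * s := by
  classical
  let K := IntermediateField.adjoin ℚ (S : Set ℂ)
  have hfin : FiniteDimensional ℚ K :=
    IntermediateField.finiteDimensional_adjoin fun s hs => (hS s hs).isIntegral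
  have hK : NumberField K := ⟨⟩
  have hmem : ∀ s ∈ S, s ∈ K := fun s hs => IntermediateField.subset_adjoin ℚ (S : Set ℂ) hs
  obtain ⟨y, hy, hint⟩ := exists_integral_multiples ℤ ℚ (L := K)
    (S.attach.image fun s : S => (⟨s, hmem s s.2⟩ : K))
  refine ⟨K, hK, y, hy, fun s hs => ⟨⟨y • ⟨s, hmem s hs⟩, hint _ ?_⟩, ?_⟩⟩
  · exact mem_image_of_mem _ (mem_attach S ⟨s, hs⟩)
  · simp [zsmul_eq_mul]

theorem injective_natCast_mul_add_natCast_mul {F : Type*} [Field F] [CharZero F] {b₁ b₂ : F}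
    (hb : LinearIndependent ℚ ![b₁, b₂]) :
    Function.Injective fun x : ℕ × ℕ => (x.1 : F) * b₁ + x.2 * b₂ := by
  rintro ⟨j, k⟩ ⟨j', k'⟩ h
  have hzero : ((j : ℚ) - j') • b₁ + ((k : ℚ) - k') • b₂ = 0 := by
    simp only [Rat.smul_def, Rat.cast_sub, Rat.cast_natCast]
    linear_combination h
  obtain ⟨hj, hk⟩ := LinearIndependent.pair_iff.1 hb _ _ hzero
  exact Prod.ext (by exact_mod_cast sub_eq_zero.1 hj) (by exact_mod_cast sub_eq_zero.1 hk)

theorem gelfond_schneider {b₁ b₂ w : ℂ} (hb₁ : IsAlgebraic ℚ b₁) (hb₂ : IsAlgebraic ℚ b₂)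
    (hb : LinearIndependent ℚ ![b₁, b₂]) (hw : w ≠ 0)
    (hexp : IsAlgebraic ℚ (Complex.exp (b₁ * w))) : Transcendental ℚ (Complex.exp (b₂ * w)) := by
  intro hexp'
  obtain ⟨K, _, y, hy, hK⟩ := exists_numberField_forall_exists_eq_intCast_mul
    {b₁, b₂, Complex.exp (b₁ * w), Complex.exp (b₂ * w)} (by simp [*])
  simp only [mem_insert, mem_singleton, forall_eq_or_imp, forall_eq] at hK
  obtain ⟨⟨c₁, hc₁⟩, ⟨c₂, hc₂⟩, ⟨u₁, hu₁⟩, ⟨u₂, hu₂⟩⟩ := hK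
  have hyC : (y : ℂ) ≠ 0 := Int.cast_ne_zero.2 hy
  have hscale (b : ℂ) : y * b * (w / y) = b * w := by field_simp
  refine embedding_ne_mul_exp_of_embedding_eq_mul_exp (algebraMap K ℂ) (div_ne_zero hw hyC)
    (b₁ := c₁) (b₂ := c₂) (u₁ := u₁) (u₂ := u₂) (δ := y) (Int.cast_ne_zero.2 hy) ?_ ?_ ?_
  · intro x x' h
    have hcoe := congrArg (fun z : 𝓞 K => algebraMap K ℂ z) h
    simp only [map_add, map_mul, map_natCast, hc₁, hc₂, mul_left_comm _ (y : ℂ), ← mul_add] at hcoe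
    exact injective_natCast_mul_add_natCast_mul hb (mul_left_cancel₀ hyC hcoe)
  · simp only [hu₁, hc₁, hscale, map_intCast]
  · simp only [hu₂, hc₂, hscale, map_intCast]

end GelfondSchneider

/-! ### Transcendence of `π / log a` -/

section Irrationality

theorem transcendental_pi_div_log {a : ℝ} (ha : IsAlgebraic ℚ a) (ha₀ : 0 < a) (ha₁ : a ≠ 1) :
    Transcendental ℚ (Real.pi / Real.log a) := by
  intro halg
  have hlog : Real.log a ≠ 0 := Real.log_ne_zero_of_pos_of_ne_one ha₀ ha₁
  have hlogC : (Real.log a : ℂ) ≠ 0 := Complex.ofReal_ne_zero.2 hlog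
  have hI : IsAlgebraic ℚ Complex.I := Complex.isIntegral_rat_I.isAlgebraic
  have hindep : LinearIndependent ℚ ![1, ((Real.pi / Real.log a : ℝ) : ℂ) * Complex.I] := by
    refine (LinearIndependent.pair_iff' one_ne_zero).2 fun q hq => ?_
    have him := congrArg Complex.im hq
    exact div_ne_zero Real.pi_ne_zero hlog (by simpa [Rat.smul_def] using him.symm)
  refine gelfond_schneider isAlgebraic_one (halg.algebraMap.mul hI) hindep hlogC ?_ ?_
  · rw [one_mul, ← Complex.ofReal_exp, Real.exp_log ha₀]
    exact ha.algebraMap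
  · have hturn : algebraMap ℝ ℂ (Real.pi / Real.log a) * Complex.I * Real.log a =
        Real.pi * Complex.I := by
      rw [Complex.coe_algebraMap]
      push_cast
      field_simp
    rw [hturn, Complex.exp_pi_mul_I]
    exact isAlgebraic_one.neg

theorem sin_natCast_mul_arctan_ne_zero {x : ℝ} (hx : Transcendental ℚ x) {d : ℕ} (hd : 1 ≤ d) :
    Real.sin (d * Real.arctan x) ≠ 0 := by
  intro hsin
  obtain ⟨k, hk⟩ := Real.sin_eq_zero_iff.1 hsin
  have hd₀ : (d : ℝ) ≠ 0 := by positivity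
  have harctan : Real.arctan x = (k / d : ℚ) * Real.pi := by
    push_cast
    field_simp
    linarith
  apply hx
  rw [← Real.tan_arctan x, harctan]
  exact (Real.isAlgebraic_tan_rat_mul_pi _).extendScalars (algebraMap ℤ ℚ).injective_int

theorem isAlgebraic_three_add_two_mul_sqrt_two : IsAlgebraic ℚ (3 + 2 * √2 : ℝ) := by
  have hsqrt : IsIntegral ℚ √2 := .of_pow two_pos (by
    rw [Real.sq_sqrt zero_le_two]
    exact mod_cast isIntegral_natCast (B := ℝ) 2)
  exact mod_cast ((isIntegral_natCast 3).add ((isIntegral_natCast 2).mul hsqrt)).isAlgebraic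

end Irrationality

/-! ### Insertion of a maximal letter -/

section Insertion

open Finset

variable {α : Type*} [LinearOrder α] {n i k : ℕ} {a : ℕ → α} {x : α}

/-- The peak set of the word formed by the first `n` letters of `a`, with positions counted from
`0`. -/
def peakSet (n : ℕ) (a : ℕ → α) : Finset ℕ :=
  {k ∈ range n | 1 ≤ k ∧ k + 1 < n ∧ a (k - 1) < a k ∧ a (k + 1) < a k}

/-- The word obtained from `a` by inserting the letter `x` at position `i`. -/
def insertAt {α : Type*} (i : ℕ) (x : α) (a : ℕ → α) (k : ℕ) : α :=
  if k < i then a k else if k = i then x else a (k - 1)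

/-- The positions at which inserting a maximal letter into the first `n` letters of `a` preserves
the number of peaks: next to a peak, or at an end of the word. -/
def neutralSlots (n : ℕ) (a : ℕ → α) : Finset ℕ :=
  peakSet n a ∪ (peakSet n a).map (addRightEmbedding 1) ∪ {0, n}

theorem mem_peakSet : k ∈ peakSet n a ↔ 1 ≤ k ∧ k + 1 < n ∧ a (k - 1) < a k ∧ a (k + 1) < a k := by
  grind [peakSet]

theorem add_one_notMem_peakSet (hk : k ∈ peakSet n a) : k + 1 ∉ peakSet n a := by
  grind [mem_peakSet]

theorem peakSet_congr {b : ℕ → α} (h : ∀ k < n, a k = b k) : peakSet n a = peakSet n b := by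
  ext k
  grind [mem_peakSet]

theorem mem_neutralSlots :
    i ∈ neutralSlots n a ↔
      i ∈ peakSet n a ∨ (1 ≤ i ∧ i - 1 ∈ peakSet n a) ∨ i = 0 ∨ i = n := by
  grind [neutralSlots]

theorem card_neutralSlots (hn : 1 ≤ n) (a : ℕ → α) :
    #(neutralSlots n a) = 2 * #(peakSet n a) + 2 := by
  have hdisj : Disjoint (peakSet n a) ((peakSet n a).map (addRightEmbedding 1)) := by
    rw [disjoint_right]
    grind [add_one_notMem_peakSet]
  have hends : Disjoint (peakSet n a ∪ (peakSet n a).map (addRightEmbedding 1)) {0, n} := by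
    rw [disjoint_left]
    grind [mem_peakSet]
  rw [neutralSlots, card_union_of_disjoint hends, card_union_of_disjoint hdisj, card_map,
    card_pair (by omega)]
  ring

theorem neutralSlots_subset_range (n : ℕ) (a : ℕ → α) : neutralSlots n a ⊆ range (n + 1) := by
  grind [mem_neutralSlots, mem_peakSet]

theorem mem_peakSet_insertAt (hx : ∀ k < n, a k < x) (hi : i ≤ n) :
    k ∈ peakSet (n + 1) (insertAt i x a) ↔
      (k ∈ peakSet n a ∧ k + 1 < i) ∨ (k = i ∧ 1 ≤ i ∧ i < n) ∨
      (1 ≤ k ∧ k - 1 ∈ peakSet n a ∧ i < k - 1) := by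
  grind (splits := 20) [mem_peakSet, insertAt]

theorem card_peakSet_insertAt (hx : ∀ k < n, a k < x) (hi : i ≤ n) :
    #(peakSet (n + 1) (insertAt i x a)) =
      #{k ∈ peakSet n a | k ≠ i ∧ k + 1 ≠ i} + #{k ∈ ({i} : Finset ℕ) | 1 ≤ k ∧ k < n} := by
  let shift (k : ℕ) : ℕ := if k < i then k else k + 1
  have hshift : Function.Injective shift := fun j k h => by grind
  have hunion : peakSet (n + 1) (insertAt i x a) =
      {k ∈ peakSet n a | k ≠ i ∧ k + 1 ≠ i}.image shift ∪
        {k ∈ ({i} : Finset ℕ) | 1 ≤ k ∧ k < n} := by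
    ext k
    simp only [mem_peakSet_insertAt hx hi, mem_union, mem_image, mem_filter, mem_singleton]
    constructor
    · rintro (⟨hk, hki⟩ | hki | ⟨hk₁, hk, hik⟩)
      · exact .inl ⟨k, ⟨hk, by omega, by omega⟩, if_pos (by omega)⟩
      · exact .inr (by omega)
      · exact .inl ⟨k - 1, ⟨hk, by omega, by omega⟩, by grind⟩
    · rintro (⟨j, ⟨hj, hji⟩, rfl⟩ | hki) <;> grind
  have hdisj : Disjoint ({k ∈ peakSet n a | k ≠ i ∧ k + 1 ≠ i}.image shift)
      {k ∈ ({i} : Finset ℕ) | 1 ≤ k ∧ k < n} := by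
    rw [disjoint_left]
    grind
  rw [hunion, card_union_of_disjoint hdisj, card_image_of_injective _ hshift]

theorem card_peakSet_insertAt_of_mem_neutralSlots (hx : ∀ k < n, a k < x)
    (hmem : i ∈ neutralSlots n a) :
    #(peakSet (n + 1) (insertAt i x a)) = #(peakSet n a) := by
  have hi : i ≤ n := Nat.lt_succ_iff.1 (mem_range.1 (neutralSlots_subset_range n a hmem))
  rw [card_peakSet_insertAt hx hi]
  obtain hpeak | ⟨hi₁, hpeak⟩ | hend := mem_neutralSlots.1 hmem
  · have herase : {k ∈ peakSet n a | k ≠ i ∧ k + 1 ≠ i} = (peakSet n a).erase i := by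
      grind [add_one_notMem_peakSet]
    rw [herase, ← card_erase_add_one hpeak, filter_true_of_mem (by grind [mem_peakSet]),
      card_singleton]
  · have hnotMem : i ∉ peakSet n a := by
      simpa only [Nat.sub_add_cancel hi₁] using add_one_notMem_peakSet hpeak
    have herase : {k ∈ peakSet n a | k ≠ i ∧ k + 1 ≠ i} = (peakSet n a).erase (i - 1) := by
      grind
    rw [herase, ← card_erase_add_one hpeak, filter_true_of_mem (by grind [mem_peakSet]),
      card_singleton]
  · rw [filter_true_of_mem (by grind [mem_peakSet]), filter_false_of_mem (by grind), card_empty,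
      add_zero]

theorem card_peakSet_insertAt_of_notMem_neutralSlots (hx : ∀ k < n, a k < x) (hi : i ≤ n)
    (hmem : i ∉ neutralSlots n a) :
    #(peakSet (n + 1) (insertAt i x a)) = #(peakSet n a) + 1 := by
  rw [mem_neutralSlots] at hmem
  rw [card_peakSet_insertAt hx hi, filter_true_of_mem (by grind), filter_true_of_mem (by grind),
    card_singleton]

theorem two_mul_card_peakSet_lt (hn : 1 ≤ n) (a : ℕ → α) : 2 * #(peakSet n a) < n := by
  have hcard := card_le_card (neutralSlots_subset_range n a)
  rw [card_neutralSlots hn, card_range] at hcard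
  omega

theorem sum_card_peakSet_insertAt {M : Type*} [AddCommMonoid M] (hn : 1 ≤ n)
    (hx : ∀ k < n, a k < x) (g : ℕ → M) :
    ∑ i ∈ range (n + 1), g #(peakSet (n + 1) (insertAt i x a)) =
      (2 * #(peakSet n a) + 2) • g #(peakSet n a) +
      (n - 1 - 2 * #(peakSet n a)) • g (#(peakSet n a) + 1) := by
  have hsub := neutralSlots_subset_range n a
  have hneutral : ∀ i ∈ neutralSlots n a,
      g #(peakSet (n + 1) (insertAt i x a)) = g #(peakSet n a) := fun i hi => by
    rw [card_peakSet_insertAt_of_mem_neutralSlots hx hi]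
  have hother : ∀ i ∈ range (n + 1) \ neutralSlots n a,
      g #(peakSet (n + 1) (insertAt i x a)) = g (#(peakSet n a) + 1) := fun i hi => by
    rw [mem_sdiff, mem_range, Nat.lt_succ_iff] at hi
    rw [card_peakSet_insertAt_of_notMem_neutralSlots hx hi.1 hi.2]
  rw [← sum_sdiff hsub, add_comm, sum_congr rfl hneutral, sum_congr rfl hother, sum_const,
    sum_const, card_sdiff_of_subset hsub, card_neutralSlots hn, card_range]
  congr 2
  omega

end Insertion

/-! ### Recurrence for the peak distribution -/

section PeakRecurrence

open Finset

variable {n : ℕ}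

/-- The one-line notation of `σ` as a word on `ℕ`; the letters at positions `≥ n` are junk. -/
def oneLine (σ : Equiv.Perm (Fin n)) (k : ℕ) : ℕ :=
  if h : k < n then σ ⟨k, h⟩ else 0

/-- The permutation whose one-line notation is that of `σ` with a maximal letter inserted at
position `i`. -/
def insertMax (i : Fin (n + 1)) (σ : Equiv.Perm (Fin n)) : Equiv.Perm (Fin (n + 1)) :=
  (finSuccEquiv' i).trans (σ.optionCongr.trans (finSuccEquiv' (Fin.last n)).symm)

theorem oneLine_lt (σ : Equiv.Perm (Fin n)) {k : ℕ} (hk : k < n) : oneLine σ k < n := by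
  simp [oneLine, hk]

theorem numPeaks_eq_card_peakSet (σ : Equiv.Perm (Fin n)) :
    numPeaks σ = #(peakSet n (oneLine σ)) := by
  classical
  rw [numPeaks, ← card_map Fin.valEmbedding]
  congr 1
  ext k
  simp only [mem_map, mem_filter, mem_univ, true_and, Fin.valEmbedding_apply, mem_peakSet]
  constructor
  · rintro ⟨i, ⟨hi₁, hi₂, hleft, hright⟩, rfl⟩
    have hpred : (i : ℕ) - 1 < n := by omega
    exact ⟨hi₁, hi₂, by simpa [oneLine, hpred] using hleft, by simpa [oneLine, hi₂] using hright⟩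
  · rintro ⟨hk₁, hk₂, hleft, hright⟩
    have hk : k < n := by omega
    have hpred : k - 1 < n := by omega
    exact ⟨⟨k, hk⟩, ⟨hk₁, hk₂, by simpa [oneLine, hpred, hk] using hleft,
      by simpa [oneLine, hk₂, hk] using hright⟩, rfl⟩

theorem two_mul_numPeaks_lt (hn : 1 ≤ n) (σ : Equiv.Perm (Fin n)) : 2 * numPeaks σ < n := by
  rw [numPeaks_eq_card_peakSet]
  exact two_mul_card_peakSet_lt hn _

theorem insertMax_self (i : Fin (n + 1)) (σ : Equiv.Perm (Fin n)) :
    insertMax i σ i = Fin.last n := by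
  simp [insertMax]

theorem insertMax_succAbove (i : Fin (n + 1)) (σ : Equiv.Perm (Fin n)) (k : Fin n) :
    insertMax i σ (i.succAbove k) = (σ k).castSucc := by
  simp [insertMax]

theorem bijective_uncurry_insertMax (n : ℕ) :
    Function.Bijective fun x : Fin (n + 1) × Equiv.Perm (Fin n) => insertMax x.1 x.2 := by
  rw [Fintype.bijective_iff_injective_and_card]
  refine ⟨?_, by simp [Fintype.card_perm, Nat.factorial_succ]⟩
  rintro ⟨i, σ⟩ ⟨j, τ⟩ (h : insertMax i σ = insertMax j τ)
  obtain rfl : i = j := (insertMax j τ).injective <| by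
    rw [insertMax_self, ← h, insertMax_self]
  refine Prod.ext rfl (Equiv.ext fun k => Fin.castSucc_injective n ?_)
  rw [← insertMax_succAbove i σ, h, insertMax_succAbove]

theorem oneLine_insertMax (i : Fin (n + 1)) (σ : Equiv.Perm (Fin n)) {k : ℕ} (hk : k < n + 1) :
    oneLine (insertMax i σ) k = insertAt i n (oneLine σ) k := by
  obtain ⟨k, rfl⟩ : ∃ k' : Fin (n + 1), k = k' := ⟨⟨k, hk⟩, rfl⟩
  have hval : oneLine (insertMax i σ) k = insertMax i σ k := dif_pos hk
  rw [hval]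
  obtain rfl | ⟨l, rfl⟩ := i.eq_self_or_eq_succAbove k
  · simp [insertMax_self, insertAt]
  · rw [insertMax_succAbove]
    rcases lt_or_ge l.castSucc i with hli | hil
    · rw [Fin.succAbove_of_castSucc_lt _ _ hli]
      simp_all [insertAt, oneLine, Fin.lt_def]
    · rw [Fin.succAbove_of_le_castSucc _ _ hil]
      have hil' : (i : ℕ) ≤ l := hil
      simp [insertAt, oneLine, show ¬ (l : ℕ) + 1 < i by omega, show ¬ (l : ℕ) + 1 = i by omega]

theorem sum_perm_succ_numPeaks {M : Type*} [AddCommMonoid M] (hn : 1 ≤ n) (g : ℕ → M) :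
    ∑ π : Equiv.Perm (Fin (n + 1)), g (numPeaks π) =
      ∑ σ : Equiv.Perm (Fin n), ((2 * numPeaks σ + 2) • g (numPeaks σ) +
        (n - 1 - 2 * numPeaks σ) • g (numPeaks σ + 1)) := by
  rw [← (bijective_uncurry_insertMax n).sum_comp, Fintype.sum_prod_type_right]
  refine sum_congr rfl fun σ _ => ?_
  rw [numPeaks_eq_card_peakSet σ, ← sum_card_peakSet_insertAt hn (fun k => oneLine_lt σ) g,
    ← Fin.sum_univ_eq_sum_range fun i => g #(peakSet (n + 1) (insertAt i n (oneLine σ)))]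
  refine sum_congr rfl fun i _ => ?_
  rw [numPeaks_eq_card_peakSet, peakSet_congr fun k hk => oneLine_insertMax i σ hk]

end PeakRecurrence

/-! ### Peak polynomials as derivatives of solutions of a Riccati equation -/

section Riccati

/-- The peak polynomial homogenized so that it satisfies a differential recurrence: with `A` of
degree `2` and `b` of degree `1`, every term has degree `n + 1`. -/
noncomputable def homogPeakPoly {R : Type*} [CommSemiring R] (n : ℕ) (A b : R) : R :=
  ∑ π : Equiv.Perm (Fin n), A ^ (numPeaks π + 1) * b ^ (n - 1 - 2 * numPeaks π)

theorem homogPeakPoly_one {R : Type*} [CommSemiring R] (A b : R) : homogPeakPoly 1 A b = A := by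
  have hzero (π : Equiv.Perm (Fin 1)) : numPeaks π = 0 := by
    have := two_mul_numPeaks_lt le_rfl π
    omega
  simp [homogPeakPoly, hzero]

theorem homogPeakPoly_mul_sq {n : ℕ} (hn : 1 ≤ n) (t : ℝ) (b : ℂ) :
    homogPeakPoly n (t * b ^ 2) b = t * b ^ (n + 1) * peakPoly n t := by
  rw [homogPeakPoly, peakPoly, Complex.ofReal_sum, Finset.mul_sum]
  refine Finset.sum_congr rfl fun π _ => ?_
  have hdeg : 2 * (numPeaks π + 1) + (n - 1 - 2 * numPeaks π) = n + 1 := by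
    have := two_mul_numPeaks_lt hn π
    omega
  rw [← hdeg, pow_add b, pow_mul b, mul_pow, Complex.ofReal_pow, pow_succ (t : ℂ)]
  ring

variable {𝕜 : Type*} [NontriviallyNormedField 𝕜] {n : ℕ}

theorem hasDerivAt_homogPeakPoly (hn : 1 ≤ n) {A b : 𝕜 → 𝕜} {μ z : 𝕜}
    (hb : HasDerivAt b (μ * A z) z) (hA : HasDerivAt A (2 * μ * A z * b z) z) :
    HasDerivAt (fun z => homogPeakPoly n (A z) (b z))
      (μ * homogPeakPoly (n + 1) (A z) (b z)) z := by
  rw [homogPeakPoly, sum_perm_succ_numPeaks hn fun p => A z ^ (p + 1) * b z ^ (n + 1 - 1 - 2 * p),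
    Finset.mul_sum]
  refine HasDerivAt.fun_sum fun σ _ => ?_
  obtain ⟨m, hm⟩ := Nat.exists_eq_add_of_lt (two_mul_numPeaks_lt hn σ)
  generalize numPeaks σ = p at hm
  subst hm
  rw [show 2 * p + m + 1 - 1 - 2 * p = m by omega,
    show 2 * p + m + 1 + 1 - 1 - 2 * p = m + 1 by omega,
    show 2 * p + m + 1 + 1 - 1 - 2 * (p + 1) = m - 1 by omega]
  refine ((hA.fun_pow (p + 1)).fun_mul (hb.fun_pow m)).congr_deriv ?_
  cases m <;> simp <;> ring

theorem iteratedDerivWithin_eq_homogPeakPoly {U : Set 𝕜} (hU : IsOpen U) {b : 𝕜 → 𝕜} {μ c : 𝕜}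
    (hb : ∀ z ∈ U, HasDerivAt b (μ * (b z ^ 2 + c)) z) (hn : 1 ≤ n) :
    ∀ z ∈ U, iteratedDerivWithin n b U z = μ ^ n * homogPeakPoly n (b z ^ 2 + c) (b z) := by
  induction n, hn using Nat.le_induction with
  | base =>
    intro z hz
    rw [iteratedDerivWithin_one, derivWithin_of_isOpen hU hz, (hb z hz).deriv, homogPeakPoly_one,
      pow_one]
  | succ n hn ih =>
    intro z hz
    have hA : HasDerivAt (fun z => b z ^ 2 + c) (2 * μ * (b z ^ 2 + c) * b z) z :=
      (((hb z hz).fun_pow 2).add_const c).congr_deriv (by ring)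
    have hderiv := (hasDerivAt_homogPeakPoly hn (hb z hz) hA).const_mul (μ ^ n)
    rw [iteratedDerivWithin_succ, derivWithin_congr ih (ih z hz), derivWithin_of_isOpen hU hz,
      hderiv.deriv, pow_succ μ, mul_assoc]

end Riccati

/-! ### Series expansion of the values of peak polynomials -/

section CotangentSeries

open Complex UpperHalfPlane
open scoped Real

theorem hasDerivAt_pi_mul_cot_pi_mul {z : ℂ} (hz : z ∈ Complex.integerComplement) :
    HasDerivAt (fun x : ℂ => π * cot (π * x)) (-1 * ((π * cot (π * z)) ^ 2 + π ^ 2)) z := by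
  have hsin : sin (π * z) ≠ 0 := sin_pi_mul_ne_zero hz
  have hlin : HasDerivAt (fun x : ℂ => π * x) π z := by
    simpa using (hasDerivAt_id z).const_mul (π : ℂ)
  refine ((hlin.ccos.fun_div hlin.csin hsin).const_mul (π : ℂ)).congr_deriv ?_
  rw [cot]
  field_simp
  ring

theorem peakPoly_mul_pi_mul_cot_pow {n : ℕ} (hn : 1 ≤ n) {t : ℝ} {z : ℂ}
    (hz : z ∈ upperHalfPlaneSet) (ht : cot (π * z) ^ 2 + 1 = t * cot (π * z) ^ 2) :
    t * (π * cot (π * z)) ^ (n + 1) * peakPoly n t =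
      n.factorial * ∑' k : ℤ, 1 / (z + k) ^ (n + 1) := by
  have hriccati (w : ℂ) (hw : w ∈ upperHalfPlaneSet) :=
    hasDerivAt_pi_mul_cot_pi_mul (UpperHalfPlane.coe_mem_integerComplement ⟨w, hw⟩)
  have hA : (π * cot (π * z)) ^ 2 + π ^ 2 = t * (π * cot (π * z)) ^ 2 := by
    linear_combination (π : ℂ) ^ 2 * ht
  have hderiv := iteratedDerivWithin_eq_homogPeakPoly isOpen_upperHalfPlaneSet hriccati hn z hz
  rw [iteratedDerivWithin_cot_pi_mul_eq_mul_tsum_div_pow hn hz, hA, homogPeakPoly_mul_sq hn,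
    mul_assoc] at hderiv
  exact (mul_left_cancel₀ (pow_ne_zero n (neg_ne_zero.2 one_ne_zero)) hderiv).symm

end CotangentSeries

/-! ### Power sums with a dominant conjugate pair -/

section PowerSums

open Filter Topology

theorem tendsto_tsum_pow_div_pow {ι 𝕜 : Type*} [NormedField 𝕜] {c : ι → 𝕜} {r ρ : ℝ}
    (hsum : Summable fun k => ‖c k‖ ^ 2) (hc : ∀ k, ‖c k‖ ≤ r) (hr : 0 ≤ r) (hrρ : r < ρ) :
    Tendsto (fun n : ℕ => ‖∑' k, c k ^ n‖ / ρ ^ n) atTop (𝓝 0) := by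
  have hρ : 0 < ρ := hr.trans_lt hrρ
  have hbound (n : ℕ) : ‖∑' k, c k ^ (n + 2)‖ ≤ (∑' k, ‖c k‖ ^ 2) * r ^ n := by
    refine tsum_of_norm_bounded (hsum.hasSum.mul_right (r ^ n)) fun k => ?_
    rw [norm_pow, pow_add, mul_comm]
    gcongr
    exact hc k
  have hgeom : Tendsto (fun n : ℕ => (∑' k, ‖c k‖ ^ 2) / ρ ^ 2 * (r / ρ) ^ n) atTop (𝓝 0) := by
    simpa only [mul_zero] using (tendsto_pow_atTop_nhds_zero_of_lt_one (div_nonneg hr hρ.le)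
      ((div_lt_one hρ).2 hrρ)).const_mul ((∑' k, ‖c k‖ ^ 2) / ρ ^ 2)
  refine (tendsto_add_atTop_iff_nat 2).1 (squeeze_zero (fun n => by positivity) (fun n => ?_) hgeom)
  calc ‖∑' k, c k ^ (n + 2)‖ / ρ ^ (n + 2)
    _ ≤ (∑' k, ‖c k‖ ^ 2) * r ^ n / ρ ^ (n + 2) := by gcongr; exact hbound n
    _ = (∑' k, ‖c k‖ ^ 2) / ρ ^ 2 * (r / ρ) ^ n := by rw [div_pow, pow_add]; field_simp

theorem pow_add_conj_pow (z : ℂ) (n : ℕ) :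
    z ^ n + (starRingEnd ℂ z) ^ n = (2 * ‖z‖ ^ n * Real.cos (n * z.arg) : ℝ) := by
  have hre : (z ^ n).re = ‖z‖ ^ n * Real.cos (n * z.arg) := by
    rw [← Complex.norm_mul_cos_arg, norm_pow, ← Real.Angle.cos_coe, Complex.arg_pow_coe_angle,
      ← Real.Angle.coe_nsmul, Real.Angle.cos_coe, nsmul_eq_mul]
  rw [← map_pow, Complex.add_conj, hre, mul_assoc]

theorem arg_eq_arctan_of_re_pos {z : ℂ} (hz : 0 < z.re) : z.arg = Real.arctan (z.im / z.re) := by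
  have harg := abs_lt.1 (Complex.abs_arg_lt_pi_div_two_iff.2 (.inl hz))
  rw [← Complex.tan_arg, Real.arctan_tan harg.1 harg.2]

end PowerSums

/-! ### Asymptotics of `f` -/

section Asymptotics

open Complex Filter Topology
open scoped Real

/-- The logarithm `log (3 + 2√2)`, in terms of which the poles of the exponential generating
function of `f` are expressed. -/
noncomputable def poleLog : ℝ := Real.log (3 + 2 * √2)

/-- The inverses of the poles of the exponential generating function of `f`, indexed so that `0`
and `-1` give the dominant conjugate pair. -/
noncomputable def inversePole (k : ℤ) : ℂ :=
  (2 * √2 : ℝ) / (poleLog + (-((2 * k + 1) * π) : ℝ) * I)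

/-- The point of the upper half-plane with `cot (πτ) = 1 / (i√2)`, hence with
`cot² (πτ) + 1 = -cot² (πτ)`. -/
noncomputable def polePoint : ℂ := (1 / 2 : ℝ) + (poleLog / (2 * π) : ℝ) * I

theorem poleLog_pos : 0 < poleLog := Real.log_pos (by linarith [Real.sqrt_nonneg 2])

theorem polePoint_mem_upperHalfPlaneSet : polePoint ∈ UpperHalfPlane.upperHalfPlaneSet := by
  have him : polePoint.im = poleLog / (2 * π) := by
    simp only [polePoint, add_im, im_ofReal_mul, ofReal_im, I_im, mul_one, zero_add]
  have := poleLog_pos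
  change 0 < polePoint.im
  rw [him]
  positivity

theorem exp_two_pi_mul_I_mul_polePoint : exp (2 * π * I * polePoint) = -(3 - 2 * √2) := by
  have harg : 2 * π * I * polePoint = π * I - poleLog := by
    rw [polePoint]
    push_cast
    field_simp
    linear_combination (poleLog : ℂ) * I_sq
  have hexp : Real.exp (-poleLog) = 3 - 2 * √2 := by
    rw [poleLog, Real.exp_neg, Real.exp_log (by positivity)]
    refine inv_eq_of_mul_eq_one_right ?_
    linear_combination -4 * Real.sq_sqrt (zero_le_two (α := ℝ))
  rw [harg, sub_eq_add_neg, exp_add, exp_pi_mul_I, ← ofReal_neg, ← ofReal_exp, hexp]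
  push_cast
  ring

theorem ofReal_sqrt_two_sq : (√2 : ℂ) ^ 2 = 2 := by
  rw [← ofReal_pow, Real.sq_sqrt zero_le_two, ofReal_ofNat]

theorem cot_pi_mul_polePoint : cot (π * polePoint) = (I * √2)⁻¹ := by
  have hden : (4 - 2 * √2 : ℂ) ≠ 0 := by
    have hreal : (4 - 2 * √2 : ℝ) ≠ 0 := by
      nlinarith [Real.sq_sqrt (zero_le_two (α := ℝ)), Real.sqrt_nonneg 2]
    exact_mod_cast hreal
  have hsqrt : (√2 : ℂ) ≠ 0 := by simp
  rw [Complex.cot_pi_eq_exp_ratio, exp_two_pi_mul_I_mul_polePoint,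
    show (1 - -(3 - 2 * √2) : ℂ) = 4 - 2 * √2 by ring, div_eq_iff (mul_ne_zero I_ne_zero hden)]
  field_simp
  linear_combination 2 * ofReal_sqrt_two_sq

theorem inversePole_eq_div (k : ℤ) : inversePole k = I * √2 / π / (polePoint + k) := by
  have hden : (poleLog + (-((2 * k + 1) * π) : ℝ) * I : ℂ) = -(2 * I * π) * (polePoint + k) := by
    rw [polePoint]
    push_cast
    field_simp
    linear_combination (poleLog : ℂ) * I_sq
  rw [inversePole, hden, ← div_div]
  congr 1
  push_cast
  field_simp
  simp

theorem f_eq_tsum_inversePole_pow {n : ℕ} (hn : 1 ≤ n) :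
    (f n : ℂ) = -(n.factorial * ∑' k : ℤ, inversePole k ^ (n + 1)) := by
  have hcot : cot (π * polePoint) ^ 2 + 1 = (-1 : ℝ) * cot (π * polePoint) ^ 2 := by
    rw [cot_pi_mul_polePoint, inv_pow, mul_pow, I_sq, ofReal_sqrt_two_sq]
    norm_num
  have hseries := peakPoly_mul_pi_mul_cot_pow hn polePoint_mem_upperHalfPlaneSet hcot
  have hpow (k : ℤ) : inversePole k ^ (n + 1) =
      (I * √2 / π) ^ (n + 1) * (1 / (polePoint + k) ^ (n + 1)) := by
    rw [inversePole_eq_div, div_pow, mul_one_div]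
  have hunit : (I * √2 / π) ^ (n + 1) * (π * (I * √2)⁻¹) ^ (n + 1) = 1 := by
    rw [← mul_pow, mul_comm, ← div_eq_mul_inv, div_mul_div_cancel₀, div_self, one_pow] <;> simp
  simp_rw [hpow]
  rw [tsum_mul_left, mul_left_comm, ← hseries, cot_pi_mul_polePoint, f]
  push_cast
  linear_combination -(peakPoly n (-1) : ℂ) * hunit

theorem summable_norm_inversePole_pow {n : ℕ} (hn : 2 ≤ n) :
    Summable fun k => ‖inversePole k‖ ^ n := by
  have hsum := (EisensteinSeries.linear_right_summable polePoint 1 (k := n)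
    (by exact_mod_cast hn)).norm.mul_left (‖I * √2 / π‖ ^ n)
  refine hsum.congr fun k => ?_
  simp [inversePole_eq_div, div_eq_mul_inv, mul_pow]

theorem norm_inversePole (k : ℤ) :
    ‖inversePole k‖ = 2 * √2 / √(poleLog ^ 2 + ((2 * k + 1) * π) ^ 2) := by
  rw [inversePole, norm_div, norm_add_mul_I, neg_sq, norm_real, Real.norm_of_nonneg (by positivity)]

theorem norm_inversePole_le_norm_inversePole_one {k : ℤ} (hk : k ∉ ({0, -1} : Finset ℤ)) :
    ‖inversePole k‖ ≤ ‖inversePole 1‖ := by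
  have hsq : (2 * (1 : ℤ) + 1 : ℝ) ^ 2 ≤ (2 * k + 1) ^ 2 := by
    have habs : |(3 : ℤ)| ≤ |2 * k + 1| := by grind
    exact_mod_cast sq_le_sq.2 habs
  have := poleLog_pos
  rw [norm_inversePole, norm_inversePole, mul_pow _ π, mul_pow _ π]
  gcongr

theorem norm_inversePole_one_lt_norm_inversePole_zero :
    ‖inversePole 1‖ < ‖inversePole 0‖ := by
  have := poleLog_pos
  have := Real.pi_pos
  rw [norm_inversePole, norm_inversePole]
  gcongr
  norm_num

theorem inversePole_neg_one : inversePole (-1) = starRingEnd ℂ (inversePole 0) := by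
  rw [inversePole, inversePole, map_div₀, map_add, map_mul, conj_ofReal, conj_ofReal, conj_ofReal,
    conj_I]
  push_cast
  ring_nf

theorem arg_inversePole_zero : (inversePole 0).arg = Real.arctan (π / poleLog) := by
  have hlog := poleLog_pos
  have hdir : inversePole 0 =
      (2 * √2 / (poleLog ^ 2 + π ^ 2) : ℝ) * (poleLog + π * I) := by
    have hden : (poleLog + (-((2 * (0 : ℤ) + 1) * π) : ℝ) * I : ℂ) ≠ 0 := fun h =>
      hlog.ne' (by simpa using congrArg re h)
    have hsq : (poleLog ^ 2 + π ^ 2 : ℂ) ≠ 0 := by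
      exact_mod_cast (by positivity : poleLog ^ 2 + π ^ 2 ≠ 0)
    rw [inversePole, div_eq_iff hden]
    push_cast
    field_simp
    linear_combination (π : ℂ) ^ 2 * I_sq
  rw [hdir, arg_real_mul _ (by positivity), arg_eq_arctan_of_re_pos (by simpa using hlog)]
  simp

theorem norm_inversePole_zero_pos : 0 < ‖inversePole 0‖ :=
  (norm_nonneg _).trans_lt norm_inversePole_one_lt_norm_inversePole_zero

theorem f_div_add_cos_eq_tsum {n : ℕ} (hn : 1 ≤ n) :
    ((f n / (2 * n.factorial * ‖inversePole 0‖ ^ (n + 1)) +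
      Real.cos ((n + 1 : ℕ) * (inversePole 0).arg) : ℝ) : ℂ) =
      -(∑' k : {k // k ∉ ({0, -1} : Finset ℤ)}, inversePole k ^ (n + 1)) /
        (2 * ‖inversePole 0‖ ^ (n + 1)) := by
  have hsum : Summable fun k => inversePole k ^ (n + 1) :=
    .of_norm (by simpa only [norm_pow] using summable_norm_inversePole_pow (by omega : 2 ≤ n + 1))
  have hsplit := hsum.sum_add_tsum_subtype_compl {0, -1}
  rw [Finset.sum_pair (by norm_num), inversePole_neg_one, pow_add_conj_pow] at hsplit
  have hfactorial : (n.factorial : ℂ) ≠ 0 := by exact_mod_cast n.factorial_ne_zero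
  have hρ : (‖inversePole 0‖ : ℂ) ≠ 0 := by exact_mod_cast norm_inversePole_zero_pos.ne'
  rw [ofReal_add, ofReal_div, f_eq_tsum_inversePole_pow hn, ← hsplit]
  push_cast
  field_simp
  ring

theorem tendsto_f_div_add_cos :
    Tendsto (fun n : ℕ => f n / (2 * n.factorial * ‖inversePole 0‖ ^ (n + 1)) +
      Real.cos ((n + 1 : ℕ) * (inversePole 0).arg)) atTop (𝓝 0) := by
  have htail := (tendsto_tsum_pow_div_pow
    (c := fun k : {k // k ∉ ({0, -1} : Finset ℤ)} => inversePole k)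
    ((summable_norm_inversePole_pow le_rfl).subtype _)
    (fun k => norm_inversePole_le_norm_inversePole_one k.2) (norm_nonneg _)
    norm_inversePole_one_lt_norm_inversePole_zero).comp (tendsto_add_atTop_nat 1)
  have hhalf := htail.div_const 2
  rw [zero_div] at hhalf
  refine squeeze_zero_norm' ?_ hhalf
  filter_upwards [eventually_ge_atTop 1] with n hn
  rw [← norm_real, f_div_add_cos_eq_tsum hn, norm_div, norm_neg, norm_mul, norm_pow, norm_real,
    norm_norm, Complex.norm_ofNat, Function.comp_apply, div_div, mul_comm (2 : ℝ)]

end Asymptotics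

open scoped Classical in
open Filter in
/-- The set of `n` for which `fₙ` and `-cos((n+1)θ)` do not have the same sign
has natural density zero: `(1/N)·#{n ≤ N : sign fₙ ≠ sign(-cos((n+1)θ))} → 0`
as `N → ∞`, where `θ = arctan(π / log(3+2√2))`. -/
theorem sign_mismatch_density_zero :
    Tendsto (fun N : ℕ =>
        (((Finset.range (N + 1)).filter fun n : ℕ =>
            Real.sign (f n) ≠
              Real.sign (-Real.cos ((n + 1) *
                Real.arctan (Real.pi / Real.log (3 + 2 * Real.sqrt 2))))).card : ℝ) / N)
      atTop (nhds 0) := by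
  have hsin (d : ℕ) (hd : 1 ≤ d) : Real.sin (d * (inversePole 0).arg) ≠ 0 := by
    rw [arg_inversePole_zero]
    exact sin_natCast_mul_arctan_ne_zero (transcendental_pi_div_log
      isAlgebraic_three_add_two_mul_sqrt_two (by positivity) (by linarith [Real.sqrt_nonneg 2])) hd
  have hphase (n : ℕ) : Real.cos (n * (inversePole 0).arg + ((inversePole 0).arg + Real.pi)) =
      -Real.cos ((n + 1) * (inversePole 0).arg) := by
    rw [← Real.cos_add_pi]
    ring_nf
  have hdensity := tendsto_card_sign_ne_sign_cos_div_zero hsin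
    (tendsto_f_div_add_cos.congr fun n => by rw [hphase, sub_neg_eq_add, Nat.cast_add_one])
  have hsign (n : ℕ) : Real.sign (f n / (2 * n.factorial * ‖inversePole 0‖ ^ (n + 1))) =
      Real.sign (f n) :=
    sign_div_of_pos (by have := norm_inversePole_zero_pos; positivity)
  simp only [hsign, hphase] at hdensity
  simpa only [arg_inversePole_zero, poleLog] using hdensity
end
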